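/- Let C ∈ RH∞^{n×n} be real-rational and γ > 0. Then the following are equivalent: (i) [P,C] is stable for every P in N₀ satisfying P(0) ≤ γI; (ii) [P,C] is stable for every P in N₀ satisfying 0 ≤ P(0) ≤ γI; (iii) C is strictly negative imaginary (SNI), C(∞) ≥ 0 (positive semidefinite), and C(0) < (1/γ)I. -/

import Mathlib

open Matrix Polynomial Filter Topology
open scoped ComplexOrder

noncomputable section

namespace NIControl

/-- Evaluate a real-rational function at a complex point (junk value at poles). -/
def evalC (f : RatFunc ℝ) (s : ℂ) : ℂ :=
  f.eval (algebraMap ℝ ℂ) s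

/-- `s` is a pole of the real-rational function `f`
(the reduced denominator vanishes at `s`). -/
def IsPoleAt (f : RatFunc ℝ) (s : ℂ) : Prop :=
  f.denom.eval₂ (algebraMap ℝ ℂ) s = 0

variable {n : ℕ}

/-- Pointwise evaluation of a real-rational transfer matrix at a complex point. -/
def evalM (G : Matrix (Fin n) (Fin n) (RatFunc ℝ)) (s : ℂ) : Matrix (Fin n) (Fin n) ℂ :=
  Matrix.of fun i j => evalC (G i j) s

/-- Pointwise evaluation of a real-rational transfer matrix at a real point. -/
def evalR (G : Matrix (Fin n) (Fin n) (RatFunc ℝ)) (x : ℝ) : Matrix (Fin n) (Fin n) ℝ :=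
  Matrix.of fun i j => (G i j).eval (RingHom.id ℝ) x

/-- Value at `s = ∞` of a proper real-rational function. -/
def atInfinity (f : RatFunc ℝ) : ℝ :=
  if f.num.degree = f.denom.degree then f.num.leadingCoeff / f.denom.leadingCoeff else 0

/-- The instantaneous gain `G(∞)` of a proper real-rational transfer matrix. -/
def evalInf (G : Matrix (Fin n) (Fin n) (RatFunc ℝ)) : Matrix (Fin n) (Fin n) ℝ :=
  Matrix.of fun i j => atInfinity (G i j)

/-- The matrix `G` has a pole at `s`. -/
def HasPole (G : Matrix (Fin n) (Fin n) (RatFunc ℝ)) (s : ℂ) : Prop :=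
  ∃ i j, IsPoleAt (G i j) s

/-- All entries of `G` are proper rational functions. -/
def Proper (G : Matrix (Fin n) (Fin n) (RatFunc ℝ)) : Prop :=
  ∀ i j, (G i j).num.degree ≤ (G i j).denom.degree

/-- All entries of `G` are strictly proper rational functions. -/
def StrictlyProper (G : Matrix (Fin n) (Fin n) (RatFunc ℝ)) : Prop :=
  ∀ i j, (G i j).num.degree < (G i j).denom.degree

/-- The pole of `G` at the origin (if any) is at most simple. -/
def NoDoubleOriginPole (G : Matrix (Fin n) (Fin n) (RatFunc ℝ)) : Prop :=
  ∀ i j, (G i j).denom.rootMultiplicity 0 ≤ 1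

/-- Membership in `RH∞`: proper and no poles in the closed right-half complex plane. -/
def MemRHinf {m : Type*} [Fintype m] (G : Matrix m m (RatFunc ℝ)) : Prop :=
  (∀ i j, (G i j).num.degree ≤ (G i j).denom.degree) ∧
  ∀ s : ℂ, 0 ≤ s.re → ∀ i j, ¬ IsPoleAt (G i j) s

/-- The point `jω` on the imaginary axis. -/
def jw (ω : ℝ) : ℂ := Complex.I * (ω : ℂ)

/-- The negative-imaginary frequency kernel `j (M − M*)`. -/
def niKer (M : Matrix (Fin n) (Fin n) ℂ) : Matrix (Fin n) (Fin n) ℂ :=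
  Complex.I • (M - Mᴴ)

/-- Negative imaginary (NI) real-rational transfer matrix. -/
def IsNI (G : Matrix (Fin n) (Fin n) (RatFunc ℝ)) : Prop :=
  Proper G ∧
  (∀ s : ℂ, 0 < s.re → ¬ HasPole G s) ∧
  (∀ ω : ℝ, 0 < ω → ¬ HasPole G (jw ω) → (niKer (evalM G (jw ω))).PosSemidef) ∧
  (∀ ω : ℝ, 0 < ω → HasPole G (jw ω) →
    ∃ R : Matrix (Fin n) (Fin n) ℂ, R.PosSemidef ∧
      Tendsto (fun s : ℂ => (s - jw ω) • Complex.I • evalM G s) (𝓝[≠] jw ω) (𝓝 R)) ∧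
  (HasPole G 0 →
    (∀ k : ℕ, 3 ≤ k → Tendsto (fun s : ℂ => s ^ k • evalM G s) (𝓝[≠] 0) (𝓝 0)) ∧
    ∃ R : Matrix (Fin n) (Fin n) ℂ, R.PosSemidef ∧
      Tendsto (fun s : ℂ => s ^ 2 • evalM G s) (𝓝[≠] 0) (𝓝 R))

/-- Strictly negative imaginary (SNI) real-rational transfer matrix. -/
def IsSNI (G : Matrix (Fin n) (Fin n) (RatFunc ℝ)) : Prop :=
  MemRHinf G ∧ ∀ ω : ℝ, 0 < ω → (niKer (evalM G (jw ω))).PosDef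

/-- Positive real (passive) real-rational transfer matrix. -/
def IsPositiveReal (G : Matrix (Fin n) (Fin n) (RatFunc ℝ)) : Prop :=
  MemRHinf G ∧ ∀ ω : ℝ, 0 ≤ ω → (evalM G (jw ω) + (evalM G (jw ω))ᴴ).PosSemidef

/-- Output strictly passive real-rational transfer matrix. -/
def IsOSP (G : Matrix (Fin n) (Fin n) (RatFunc ℝ)) : Prop :=
  MemRHinf G ∧ ∃ ε : ℝ, 0 < ε ∧ ∀ ω : ℝ, 0 ≤ ω →
    (evalM G (jw ω) + (evalM G (jw ω))ᴴ -
      (ε : ℂ) • ((evalM G (jw ω))ᴴ * evalM G (jw ω))).PosSemidef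

/-- Stability of the positive feedback interconnection `[P, C]`:
`[I; C] (I − P C)⁻¹ [I, P] ∈ RH∞`. -/
def FeedbackStable (P C : Matrix (Fin n) (Fin n) (RatFunc ℝ)) : Prop :=
  ((1 : Matrix (Fin n) (Fin n) (RatFunc ℝ)) - P * C).det ≠ 0 ∧
  MemRHinf (Matrix.fromBlocks
    (1 - P * C)⁻¹ ((1 - P * C)⁻¹ * P)
    (C * (1 - P * C)⁻¹) (C * (1 - P * C)⁻¹ * P))

/-- All eigenvalues of the complex matrix `M` are real and less than `c`. -/
def eigsRealAndLT (M : Matrix (Fin n) (Fin n) ℂ) (c : ℝ) : Prop :=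
  ∀ μ ∈ spectrum ℂ M, μ.im = 0 ∧ μ.re < c

/-- The (real) eigenvalues of the real matrix `M` are all real and its largest
eigenvalue is less than `c`. -/
def maxEigLT (M : Matrix (Fin n) (Fin n) ℝ) (c : ℝ) : Prop :=
  eigsRealAndLT (M.map (Complex.ofReal)) c

/-- Loewner order `A ≤ B` on real matrices. -/
def LoewnerLE (A B : Matrix (Fin n) (Fin n) ℝ) : Prop := (B - A).PosSemidef

/-- Strict Loewner order `A < B` on real matrices. -/
def LoewnerLT (A B : Matrix (Fin n) (Fin n) ℝ) : Prop := (B - A).PosDef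


/-! ## Evaluation of rational functions -/

lemma not_pole_of_dvd {f : RatFunc ℝ} {q : ℝ[X]} {s : ℂ} (h : f.denom ∣ q)
    (hq : q.eval₂ (algebraMap ℝ ℂ) s ≠ 0) : ¬ IsPoleAt f s := by
  intro hp
  obtain ⟨r, rfl⟩ := h
  apply hq
  rw [Polynomial.eval₂_mul]
  unfold IsPoleAt at hp
  rw [hp, zero_mul]

lemma not_pole_add {f g : RatFunc ℝ} {s : ℂ} (hf : ¬ IsPoleAt f s) (hg : ¬ IsPoleAt g s) :
    ¬ IsPoleAt (f + g) s :=
  not_pole_of_dvd (RatFunc.denom_add_dvd f g)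
    (by rw [Polynomial.eval₂_mul]; exact mul_ne_zero hf hg)

lemma not_pole_mul {f g : RatFunc ℝ} {s : ℂ} (hf : ¬ IsPoleAt f s) (hg : ¬ IsPoleAt g s) :
    ¬ IsPoleAt (f * g) s :=
  not_pole_of_dvd (RatFunc.denom_mul_dvd f g)
    (by rw [Polynomial.eval₂_mul]; exact mul_ne_zero hf hg)

lemma not_pole_C (c : ℝ) (s : ℂ) : ¬ IsPoleAt (RatFunc.C c) s := by
  simp [IsPoleAt]

/-- Rational functions without a pole at `s`. -/
def noPole (s : ℂ) : Subring (RatFunc ℝ) where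
  carrier := {f | ¬ IsPoleAt f s}
  mul_mem' := not_pole_mul
  one_mem' := by simpa using not_pole_C 1 s
  add_mem' := not_pole_add
  zero_mem' := by simpa using not_pole_C 0 s
  neg_mem' := by
    intro f hf
    have := not_pole_mul (not_pole_C (-1) s) hf
    simpa using this

lemma mem_noPole {s : ℂ} {f : RatFunc ℝ} : f ∈ noPole s ↔ ¬ IsPoleAt f s := Iff.rfl

/-- Evaluation at `s` as a ring homomorphism. -/
def evalHom (s : ℂ) : noPole s →+* ℂ where
  toFun f := evalC f.1 s
  map_one' := by simp [evalC]
  map_zero' := by simp [evalC]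
  map_add' f g := RatFunc.eval_add _ _ f.2 g.2
  map_mul' f g := RatFunc.eval_mul _ _ f.2 g.2

/-- Lift of a matrix without pole. -/
def liftM {m k : Type*} (s : ℂ) (G : Matrix m k (RatFunc ℝ)) (h : ∀ i j, ¬ IsPoleAt (G i j) s) :
    Matrix m k (noPole s) := Matrix.of fun i j => ⟨G i j, h i j⟩

lemma evalM_eq {s : ℂ} (G : Matrix (Fin n) (Fin n) (RatFunc ℝ)) (h : ∀ i j, ¬ IsPoleAt (G i j) s) :
    evalM G s = (evalHom s).mapMatrix (liftM s G h) := rfl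

lemma map_liftM {s : ℂ} (G : Matrix (Fin n) (Fin n) (RatFunc ℝ))
    (h : ∀ i j, ¬ IsPoleAt (G i j) s) :
    (noPole s).subtype.mapMatrix (liftM s G h) = G := rfl

/-- `G` has no pole at `s`. -/
def Reg (G : Matrix (Fin n) (Fin n) (RatFunc ℝ)) (s : ℂ) : Prop := ∀ i j, ¬ IsPoleAt (G i j) s

lemma reg_iff {G : Matrix (Fin n) (Fin n) (RatFunc ℝ)} {s : ℂ} : Reg G s ↔ ¬ HasPole G s := by
  simp [Reg, HasPole]

lemma reg_of_map {s : ℂ} (G' : Matrix (Fin n) (Fin n) (noPole s)) :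
    Reg ((noPole s).subtype.mapMatrix G') s := fun i j => (G' i j).2

lemma evalM_of_map {s : ℂ} (G' : Matrix (Fin n) (Fin n) (noPole s)) :
    evalM ((noPole s).subtype.mapMatrix G') s = (evalHom s).mapMatrix G' := rfl

section
variable {A B : Matrix (Fin n) (Fin n) (RatFunc ℝ)} {s : ℂ}

lemma exists_lift (hA : Reg A s) : ∃ A', (noPole s).subtype.mapMatrix A' = A :=
  ⟨liftM s A hA, rfl⟩

lemma Reg.mul (hA : Reg A s) (hB : Reg B s) : Reg (A * B) s := by
  obtain ⟨A, rfl⟩ := exists_lift hA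
  obtain ⟨B, rfl⟩ := exists_lift hB
  rw [← map_mul]; exact reg_of_map _

lemma Reg.add (hA : Reg A s) (hB : Reg B s) : Reg (A + B) s := by
  obtain ⟨A, rfl⟩ := exists_lift hA
  obtain ⟨B, rfl⟩ := exists_lift hB
  rw [← map_add]; exact reg_of_map _

lemma Reg.sub (hA : Reg A s) (hB : Reg B s) : Reg (A - B) s := by
  obtain ⟨A, rfl⟩ := exists_lift hA
  obtain ⟨B, rfl⟩ := exists_lift hB
  rw [← map_sub]; exact reg_of_map _

lemma Reg.one : Reg (1 : Matrix (Fin n) (Fin n) (RatFunc ℝ)) s := by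
  rw [← map_one (noPole s).subtype.mapMatrix]; exact reg_of_map _

lemma evalM_mul (hA : Reg A s) (hB : Reg B s) : evalM (A * B) s = evalM A s * evalM B s := by
  obtain ⟨A, rfl⟩ := exists_lift hA
  obtain ⟨B, rfl⟩ := exists_lift hB
  rw [← map_mul, evalM_of_map, evalM_of_map, evalM_of_map, map_mul]

lemma evalM_add (hA : Reg A s) (hB : Reg B s) : evalM (A + B) s = evalM A s + evalM B s := by
  obtain ⟨A, rfl⟩ := exists_lift hA
  obtain ⟨B, rfl⟩ := exists_lift hB
  rw [← map_add, evalM_of_map, evalM_of_map, evalM_of_map, map_add]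

lemma evalM_sub (hA : Reg A s) (hB : Reg B s) : evalM (A - B) s = evalM A s - evalM B s := by
  obtain ⟨A, rfl⟩ := exists_lift hA
  obtain ⟨B, rfl⟩ := exists_lift hB
  rw [← map_sub, evalM_of_map, evalM_of_map, evalM_of_map, map_sub]

lemma evalM_one : evalM (1 : Matrix (Fin n) (Fin n) (RatFunc ℝ)) s = 1 := by
  rw [← map_one (noPole s).subtype.mapMatrix, evalM_of_map, map_one]

lemma evalC_det (hA : Reg A s) : evalC A.det s = (evalM A s).det := by
  obtain ⟨A, rfl⟩ := exists_lift hA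
  rw [← RingHom.map_det, evalM_of_map, ← RingHom.map_det]; rfl

lemma evalC_mul {f g : RatFunc ℝ} (hf : ¬ IsPoleAt f s) (hg : ¬ IsPoleAt g s) :
    evalC (f * g) s = evalC f s * evalC g s := RatFunc.eval_mul _ _ hf hg

lemma evalC_C (c : ℝ) : evalC (RatFunc.C c) s = c := by simp [evalC]

/-- constant matrix -/
def cM (A : Matrix (Fin n) (Fin n) ℝ) : Matrix (Fin n) (Fin n) (RatFunc ℝ) := A.map RatFunc.C

lemma Reg.cM (A : Matrix (Fin n) (Fin n) ℝ) : Reg (cM A) s := fun _ _ => not_pole_C _ _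

lemma evalM_cM (A : Matrix (Fin n) (Fin n) ℝ) : evalM (cM A) s = A.map Complex.ofReal := by
  ext i j; simp [evalM, NIControl.cM, evalC_C]

lemma Reg.smul {f : RatFunc ℝ} (hf : ¬ IsPoleAt f s) (hA : Reg A s) : Reg (f • A) s :=
  fun i j => not_pole_mul hf (hA i j)

lemma evalM_smul {f : RatFunc ℝ} (hf : ¬ IsPoleAt f s) (hA : Reg A s) :
    evalM (f • A) s = evalC f s • evalM A s := by
  ext i j
  exact evalC_mul hf (hA i j)

end

/-! conjugation -/

lemma eval₂_conj (p : ℝ[X]) (s : ℂ) : p.eval₂ (algebraMap ℝ ℂ) (star s) =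
    star (p.eval₂ (algebraMap ℝ ℂ) s) := by
  rw [Polynomial.eval₂_eq_sum_range, Polynomial.eval₂_eq_sum_range, star_sum]
  simp

lemma evalC_conj (f : RatFunc ℝ) (s : ℂ) : evalC f (star s) = star (evalC f s) := by
  simp only [evalC, RatFunc.eval, eval₂_conj]
  simp

lemma pole_conj {f : RatFunc ℝ} {s : ℂ} : IsPoleAt f (star s) ↔ IsPoleAt f s := by
  simp only [IsPoleAt, eval₂_conj, star_eq_zero]

lemma evalM_conj (G : Matrix (Fin n) (Fin n) (RatFunc ℝ)) (s : ℂ) :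
    evalM G (star s) = (evalM G s).map star := by
  ext i j; exact evalC_conj _ _

lemma jw_neg (ω : ℝ) : jw (-ω) = star (jw ω) := by
  simp [jw]

lemma evalM_zero_real (G : Matrix (Fin n) (Fin n) (RatFunc ℝ)) :
    evalM G 0 = (evalR G 0).map Complex.ofReal := by
  ext i j
  simp only [evalM, evalR, Matrix.of_apply, Matrix.map_apply, evalC, RatFunc.eval]
  have h : ∀ p : ℝ[X], p.eval₂ (algebraMap ℝ ℂ) 0 = ((p.eval₂ (RingHom.id ℝ) 0 : ℝ) : ℂ) := by
    intro p
    have := Polynomial.hom_eval₂ p (RingHom.id ℝ) (algebraMap ℝ ℂ) 0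
    simp at this
    simp
  rw [h, h]; push_cast; rfl

/-! ## genericity and limits -/

/-- A filter along which every non-zero real polynomial is eventually non-zero. -/
def Gen (l : Filter ℂ) : Prop :=
  ∀ q : ℝ[X], q ≠ 0 → ∀ᶠ s in l, q.eval₂ (algebraMap ℝ ℂ) s ≠ 0

lemma poly_roots_finite {q : ℂ[X]} (hq : q ≠ 0) : {s | q.eval s = 0}.Finite := by
  refine (q.roots.toFinset.finite_toSet).subset ?_
  intro s hs
  simp [hq]; exact hs

lemma eval₂_eq_eval_map (q : ℝ[X]) (s : ℂ) : q.eval₂ (algebraMap ℝ ℂ) s =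
    (q.map (algebraMap ℝ ℂ)).eval s := (Polynomial.eval_map _ _).symm

lemma map_ne_zero' {q : ℝ[X]} (hq : q ≠ 0) : q.map (algebraMap ℝ ℂ) ≠ 0 := by
  rwa [Ne, Polynomial.map_eq_zero_iff (algebraMap ℝ ℂ).injective]

lemma gen_of_le_cofinite {l : Filter ℂ} (h : l ≤ cofinite) : Gen l := by
  intro q hq
  apply h
  have := (poly_roots_finite (map_ne_zero' hq))
  simp only [eval₂_eq_eval_map]
  exact this.eventually_cofinite_notMem

lemma gen_punctured (s : ℂ) : Gen (𝓝[≠] s) := by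
  apply gen_of_le_cofinite
  exact nhdsNE_le_cofinite s

lemma gen_cocompact : Gen (cocompact ℂ) := by
  apply gen_of_le_cofinite
  exact cocompact_le_cofinite

lemma Gen.mono {l l' : Filter ℂ} (h : Gen l) (hl : l' ≤ l) : Gen l' :=
  fun q hq => hl (h q hq)

lemma Gen.not_pole {l : Filter ℂ} (h : Gen l) (f : RatFunc ℝ) : ∀ᶠ s in l, ¬ IsPoleAt f s :=
  h _ f.denom_ne_zero

lemma Gen.reg {l : Filter ℂ} (h : Gen l) (G : Matrix (Fin n) (Fin n) (RatFunc ℝ)) :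
    ∀ᶠ s in l, Reg G s := by
  simp only [Reg, eventually_all]
  exact fun i j => h.not_pole _

lemma continuous_eval₂ (p : ℝ[X]) : Continuous fun s : ℂ => p.eval₂ (algebraMap ℝ ℂ) s := by
  simp only [eval₂_eq_eval_map]; exact Polynomial.continuous _

lemma differentiableAt_evalC {f : RatFunc ℝ} {s : ℂ} (h : ¬ IsPoleAt f s) :
    DifferentiableAt ℂ (evalC f) s := by
  unfold evalC RatFunc.eval
  apply DifferentiableAt.div
  · simp only [eval₂_eq_eval_map]; exact Polynomial.differentiableAt _
  · simp only [eval₂_eq_eval_map]; exact Polynomial.differentiableAt _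
  · exact h

lemma continuousAt_evalM {G : Matrix (Fin n) (Fin n) (RatFunc ℝ)} {s : ℂ} (h : Reg G s) :
    ContinuousAt (evalM G) s := by
  refine continuousAt_pi.2 fun i => continuousAt_pi.2 fun j => ?_
  exact (differentiableAt_evalC (h i j)).continuousAt

/-- bounded frequently near `s` implies no pole. -/
lemma not_pole_of_bdd {f : RatFunc ℝ} {s : ℂ} {B : ℝ}
    (h : ∃ᶠ z in 𝓝[≠] s, ‖evalC f z‖ ≤ B) : ¬ IsPoleAt f s := by
  intro hp
  have h1 : ∃ᶠ z in 𝓝[≠] s, ‖f.num.eval₂ (algebraMap ℝ ℂ) z‖ ≤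
      B * ‖f.denom.eval₂ (algebraMap ℝ ℂ) z‖ := by
    refine (h.and_eventually ((gen_punctured s).not_pole f)).mono ?_
    rintro z ⟨hz, hz'⟩
    have hz'' : f.denom.eval₂ (algebraMap ℝ ℂ) z ≠ 0 := hz'
    unfold evalC RatFunc.eval at hz
    rw [norm_div, div_le_iff₀ (norm_pos_iff.2 hz'')] at hz
    exact hz
  have h2 : Tendsto (fun z => B * ‖f.denom.eval₂ (algebraMap ℝ ℂ) z‖ -
      ‖f.num.eval₂ (algebraMap ℝ ℂ) z‖) (𝓝[≠] s) (𝓝 (B * ‖f.denom.eval₂ (algebraMap ℝ ℂ) s‖ -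
      ‖f.num.eval₂ (algebraMap ℝ ℂ) s‖)) := by
    apply Tendsto.mono_left _ nhdsWithin_le_nhds
    exact ((continuous_const.mul (continuous_eval₂ _).norm).sub
      (continuous_eval₂ _).norm).tendsto s
  have h3 : 0 ≤ B * ‖f.denom.eval₂ (algebraMap ℝ ℂ) s‖ - ‖f.num.eval₂ (algebraMap ℝ ℂ) s‖ :=
    ge_of_tendsto_of_frequently h2 (h1.mono fun z hz => sub_nonneg.2 hz)
  unfold IsPoleAt at hp
  rw [hp] at h3
  simp at h3
  obtain ⟨a, b, hab⟩ := f.isCoprime_num_denom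
  have := congrArg (Polynomial.eval₂ (algebraMap ℝ ℂ) s) hab
  simp only [Polynomial.eval₂_add, Polynomial.eval₂_mul, hp] at this
  have h4 : f.num.eval₂ (algebraMap ℝ ℂ) s = 0 := h3
  rw [h4] at this
  simp at this

/-- polynomial asymptotics -/
lemma tendsto_poly_div (p : ℂ[X]) {k : ℕ} (hk : p.natDegree ≤ k) :
    Tendsto (fun s : ℂ => p.eval s / s ^ k) (cocompact ℂ) (𝓝 (p.coeff k)) := by
  have h1 : Tendsto (fun s : ℂ => (p.reflect k).eval s⁻¹) (cocompact ℂ) (𝓝 (p.coeff k)) := by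
    have : p.coeff k = (p.reflect k).eval 0 := by
      rw [← Polynomial.coeff_zero_eq_eval_zero, Polynomial.coeff_reflect, Polynomial.revAt_le (Nat.zero_le k), Nat.sub_zero]
    rw [this]
    exact ((p.reflect k).continuous.tendsto 0).comp (Metric.cobounded_eq_cocompact (α := ℂ) ▸ tendsto_inv₀_cobounded)
  refine h1.congr' ?_
  have h0 : ∀ᶠ s : ℂ in cocompact ℂ, s ≠ 0 :=
    cocompact_le_cofinite (Set.finite_singleton (0:ℂ)).eventually_cofinite_notMem
  filter_upwards [h0] with s hs
  have hinv : s⁻¹ ≠ 0 := inv_ne_zero hs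
  let _ := invertibleOfNonzero hs
  have := Polynomial.eval₂_reflect_mul_pow (RingHom.id ℂ) s k p hk
  rw [invOf_eq_inv] at this
  simp only [Polynomial.eval₂_id] at this
  rw [eq_div_iff (pow_ne_zero _ hs)]; exact this

lemma tendsto_quot (N d : ℂ[X]) {k : ℕ} (hN : N.natDegree ≤ k) (hd : d.natDegree ≤ k)
    (hc : d.coeff k ≠ 0) :
    Tendsto (fun s : ℂ => N.eval s / d.eval s) (cocompact ℂ) (𝓝 (N.coeff k / d.coeff k)) := by
  refine ((tendsto_poly_div N hN).div (tendsto_poly_div d hd) hc).congr' ?_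
  have h0 : ∀ᶠ s : ℂ in cocompact ℂ, s ≠ 0 :=
    cocompact_le_cofinite (Set.finite_singleton (0:ℂ)).eventually_cofinite_notMem
  filter_upwards [h0] with s hs
  have : s ^ k ≠ 0 := pow_ne_zero _ hs
  rw [Pi.div_apply, div_div_div_cancel_right₀ this]

lemma tendsto_atInfinity {f : RatFunc ℝ} (h : f.num.degree ≤ f.denom.degree) :
    Tendsto (evalC f) (cocompact ℂ) (𝓝 (atInfinity f : ℂ)) := by
  have hN : f.num.natDegree ≤ f.denom.natDegree := Polynomial.natDegree_le_natDegree h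
  have := tendsto_quot (f.num.map (algebraMap ℝ ℂ)) (f.denom.map (algebraMap ℝ ℂ))
    (k := f.denom.natDegree) (Polynomial.natDegree_map_le.trans hN) Polynomial.natDegree_map_le
    (by simp [f.denom_ne_zero])
  simp only [Polynomial.eval_map] at this
  suffices h : (atInfinity f : ℂ) = (f.num.map (algebraMap ℝ ℂ)).coeff f.denom.natDegree /
      (f.denom.map (algebraMap ℝ ℂ)).coeff f.denom.natDegree by rw [h]; exact this
  unfold atInfinity
  split_ifs with h1
  · have : f.num.natDegree = f.denom.natDegree := Polynomial.natDegree_eq_of_degree_eq h1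
    have h3 : f.num.coeff f.denom.natDegree = f.num.leadingCoeff := by rw [← this]; rfl
    rw [Polynomial.coeff_map, Polynomial.coeff_map, h3, Polynomial.coeff_natDegree]
    push_cast; rfl
  · have h2 : f.num.degree < f.denom.degree := lt_of_le_of_ne h h1
    have : f.num.coeff f.denom.natDegree = 0 := by
      apply Polynomial.coeff_eq_zero_of_degree_lt
      rwa [← Polynomial.degree_eq_natDegree f.denom_ne_zero]
    simp [this]

lemma tendsto_evalInf {G : Matrix (Fin n) (Fin n) (RatFunc ℝ)} (h : Proper G) :
    Tendsto (evalM G) (cocompact ℂ) (𝓝 ((evalInf G).map Complex.ofReal)) := by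
  refine tendsto_pi_nhds.2 fun i => tendsto_pi_nhds.2 fun j => ?_
  exact tendsto_atInfinity (h i j)

lemma proper_of_bdd {f : RatFunc ℝ} {B : ℝ}
    (h : ∃ᶠ z in cocompact ℂ, ‖evalC f z‖ ≤ B) : f.num.degree ≤ f.denom.degree := by
  by_contra hlt
  push Not at hlt
  have hn0 : f.num ≠ 0 := by rintro h0; simp [h0] at hlt
  have hd := Polynomial.natDegree_le_natDegree hlt.le
  have h1 := tendsto_quot (f.denom.map (algebraMap ℝ ℂ)) (f.num.map (algebraMap ℝ ℂ))
    (k := f.num.natDegree) (Polynomial.natDegree_map_le.trans hd) Polynomial.natDegree_map_le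
    (by simp [hn0])
  have h2 : f.denom.coeff f.num.natDegree = 0 := by
      apply Polynomial.coeff_eq_zero_of_degree_lt
      rwa [← Polynomial.degree_eq_natDegree hn0]
  simp only [Polynomial.eval_map, Polynomial.coeff_map, h2, map_zero, zero_div] at h1
  have h3 := (h1.norm.const_mul B).const_sub 1
  have h4 : ∃ᶠ z in cocompact ℂ, 1 - B * ‖f.denom.eval₂ (algebraMap ℝ ℂ) z /
      f.num.eval₂ (algebraMap ℝ ℂ) z‖ ≤ 0 := by
    refine (h.and_eventually ((gen_cocompact.not_pole f).and (gen_cocompact _ hn0))).mono ?_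
    rintro z ⟨hz, hz', hz''⟩
    have hz3 : f.denom.eval₂ (algebraMap ℝ ℂ) z ≠ 0 := hz'
    unfold evalC RatFunc.eval at hz
    have : 1 = ‖f.num.eval₂ (algebraMap ℝ ℂ) z / f.denom.eval₂ (algebraMap ℝ ℂ) z‖ *
      ‖f.denom.eval₂ (algebraMap ℝ ℂ) z / f.num.eval₂ (algebraMap ℝ ℂ) z‖ := by
      rw [← norm_mul, div_mul_div_cancel₀ hz3, div_self hz'', norm_one]
    rw [sub_nonpos]
    calc (1:ℝ) = _ := this
      _ ≤ _ := by gcongr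
  have := le_of_tendsto_of_frequently h3 h4
  simp at this
  linarith

lemma bdd_of_tendsto {l : Filter ℂ} [l.NeBot] {g : ℂ → ℂ} {a : ℂ} (h : Tendsto g l (𝓝 a)) :
    ∃ᶠ z in l, ‖g z‖ ≤ ‖a‖ + 1 := by
  apply Eventually.frequently
  have := h.norm.eventually_lt_const (show ‖a‖ < ‖a‖ + 1 by linarith)
  exact this.mono fun z hz => hz.le

/-- entries of RH∞ functions are bounded. -/
lemma bdd_RHinf {f : RatFunc ℝ} (h : f.num.degree ≤ f.denom.degree)
    (hp : ∀ s : ℂ, 0 ≤ s.re → ¬ IsPoleAt f s) :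
    ∃ B, ∀ s : ℂ, 0 ≤ s.re → ‖evalC f s‖ ≤ B := by
  have h1 := (tendsto_atInfinity h).norm.eventually_lt_const (lt_add_one _)
  obtain ⟨K, hK, hKs⟩ := mem_cocompact.1 h1
  have hK2 : IsCompact (K ∩ {s : ℂ | 0 ≤ s.re}) :=
    hK.inter_right (isClosed_le continuous_const Complex.continuous_re)
  have hc : ContinuousOn (evalC f) (K ∩ {s : ℂ | 0 ≤ s.re}) :=
    fun s hs => (differentiableAt_evalC (hp s hs.2)).continuousAt.continuousWithinAt
  obtain ⟨B, hB⟩ := hK2.exists_bound_of_continuousOn hc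
  refine ⟨max B (‖(atInfinity f : ℂ)‖ + 1), fun s hs => ?_⟩
  by_cases hsK : s ∈ K
  · exact (hB s ⟨hsK, hs⟩).trans (le_max_left _ _)
  · exact (hKs hsK).le.trans (le_max_right _ _)

lemma tendsto_matrix_inv {l : Filter ℂ} {A : ℂ → Matrix (Fin n) (Fin n) ℂ}
    {A0 : Matrix (Fin n) (Fin n) ℂ} (h : Tendsto A l (𝓝 A0)) (h0 : A0.det ≠ 0) :
    Tendsto (fun s => (A s)⁻¹) l (𝓝 A0⁻¹) := by
  simp only [Matrix.inv_def, Ring.inverse_eq_inv']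
  have h1 : Tendsto (fun s => (A s).det) l (𝓝 A0.det) :=
    ((continuous_id.matrix_det).tendsto A0).comp h
  have h2 : Tendsto (fun s => (A s).adjugate) l (𝓝 A0.adjugate) :=
    ((continuous_id.matrix_adjugate).tendsto A0).comp h
  exact (h1.inv₀ h0).smul h2

lemma tendsto_solve {l : Filter ℂ} (hl : Gen l) {M X N : Matrix (Fin n) (Fin n) (RatFunc ℝ)}
    (hMX : M * X = N) {M0 N0 : Matrix (Fin n) (Fin n) ℂ} (hM : Tendsto (evalM M) l (𝓝 M0))
    (hN : Tendsto (evalM N) l (𝓝 N0)) (h0 : M0.det ≠ 0) :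
    Tendsto (evalM X) l (𝓝 (M0⁻¹ * N0)) := by
  have h1 := tendsto_matrix_inv hM h0
  have h2 : Tendsto (fun s => (evalM M s)⁻¹ * evalM N s) l (𝓝 (M0⁻¹ * N0)) :=
    h1.mul hN
  refine h2.congr' ?_
  have h3 : ∀ᶠ s in l, (evalM M s).det ≠ 0 :=
    (((continuous_id.matrix_det).tendsto M0).comp hM).eventually_ne h0
  filter_upwards [h3, hl.reg M, hl.reg X] with s h3 hM hX
  rw [← hMX, evalM_mul hM hX, ← Matrix.mul_assoc, Matrix.nonsing_inv_mul _ (isUnit_iff_ne_zero.2 h3),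
    Matrix.one_mul]

lemma tendsto_mulM {l : Filter ℂ} (hl : Gen l) {A B : Matrix (Fin n) (Fin n) (RatFunc ℝ)}
    {A0 B0 : Matrix (Fin n) (Fin n) ℂ} (hA : Tendsto (evalM A) l (𝓝 A0))
    (hB : Tendsto (evalM B) l (𝓝 B0)) : Tendsto (evalM (A * B)) l (𝓝 (A0 * B0)) := by
  have h2 : Tendsto (fun s => evalM A s * evalM B s) l (𝓝 (A0 * B0)) :=
    hA.mul hB
  refine h2.congr' ?_
  filter_upwards [hl.reg A, hl.reg B] with s hA hB
  rw [evalM_mul hA hB]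

lemma tendsto_subM {l : Filter ℂ} (hl : Gen l) {A B : Matrix (Fin n) (Fin n) (RatFunc ℝ)}
    {A0 B0 : Matrix (Fin n) (Fin n) ℂ} (hA : Tendsto (evalM A) l (𝓝 A0))
    (hB : Tendsto (evalM B) l (𝓝 B0)) : Tendsto (evalM (A - B)) l (𝓝 (A0 - B0)) := by
  refine (hA.sub hB).congr' ?_
  filter_upwards [hl.reg A, hl.reg B] with s hA hB
  rw [evalM_sub hA hB]

lemma tendsto_oneM {l : Filter ℂ} :
    Tendsto (evalM (1 : Matrix (Fin n) (Fin n) (RatFunc ℝ))) l (𝓝 1) := by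
  simp only [funext fun s => evalM_one (n := n) (s := s)]; exact tendsto_const_nhds

lemma tendsto_entry {l : Filter ℂ} {A : Matrix (Fin n) (Fin n) (RatFunc ℝ)}
    {A0 : Matrix (Fin n) (Fin n) ℂ} (hA : Tendsto (evalM A) l (𝓝 A0)) (i j : Fin n) :
    Tendsto (evalC (A i j)) l (𝓝 (A0 i j)) :=
  tendsto_pi_nhds.1 (tendsto_pi_nhds.1 hA i) j



/-! ## Scalar minimum principle in the right half plane -/

lemma re_nonneg_of_boundary {f : ℂ → ℂ} (hd : DiffContOnCl ℂ f {z | 0 < z.re})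
    {B : ℝ} (hB : ∀ s : ℂ, 0 ≤ s.re → ‖f s‖ ≤ B * (1 + ‖s‖))
    (him : ∀ x : ℝ, 0 ≤ (f (x * Complex.I)).re)
    (hre : ∀ ε > 0, ∀ᶠ t : ℝ in atTop, -(ε * t) ≤ (f t).re)
    {z : ℂ} (hz : 0 ≤ z.re) : 0 ≤ (f z).re := by
  have hB0 : 0 ≤ B := by
    have := (norm_nonneg _).trans (hB 0 (by simp))
    simpa using this
  have key : ∀ ε > 0, 0 ≤ (f z).re + ε * z.re := by
    intro ε hε
    have := PhragmenLindelof.right_half_plane_of_bounded_on_real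
      (f := fun s => Complex.exp (-(f s + ε * s))) (C := 1) (z := z) ?_ ?_ ?_ ?_ hz
    · rw [Complex.norm_exp] at this
      have h1 := Real.exp_le_one_iff.1 this
      simp at h1
      linarith
    · refine ⟨?_, ?_⟩
      · have h1 := hd.1
        fun_prop
      · have h1 := hd.2
        fun_prop
    · refine ⟨1, by norm_num, B + ε, ?_⟩
      apply Asymptotics.IsBigO.of_bound (Real.exp B)
      rw [eventually_inf_principal]
      refine Eventually.of_forall fun s hs => ?_
      have hs' : 0 < s.re := hs
      rw [Complex.norm_exp, Real.norm_eq_abs, abs_of_pos (Real.exp_pos _), ← Real.exp_add]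
      apply Real.exp_le_exp.2
      have h1 := hB s hs'.le
      have h2 := (Complex.abs_re_le_norm (f s))
      have h3 := abs_le.1 h2
      simp
      have : 0 ≤ ε * ‖s‖ := by positivity
      have : 0 < ε * s.re := by positivity
      nlinarith [h3.1]
    · refine isBoundedUnder_of_eventually_le (a := 1) ?_
      filter_upwards [hre ε hε] with t ht
      rw [Complex.norm_exp]
      apply Real.exp_le_one_iff.2
      simp
      linarith
    · intro x
      rw [Complex.norm_exp]
      apply Real.exp_le_one_iff.2
      have := him x
      simp
      linarith
  have ht : Tendsto (fun ε : ℝ => (f z).re + ε * z.re) (𝓝[>] 0) (𝓝 ((f z).re + 0 * z.re)) := by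
    apply Tendsto.mono_left _ nhdsWithin_le_nhds
    exact (continuous_const.add (continuous_id.mul continuous_const)).tendsto 0
  have := ge_of_tendsto ht (eventually_mem_nhdsWithin.mono fun ε hε => key ε hε)
  simpa using this

lemma re_pos_of_boundary {f : ℂ → ℂ} (hd : DiffContOnCl ℂ f {z | 0 < z.re})
    (hnn : ∀ s : ℂ, 0 < s.re → 0 ≤ (f s).re)
    {x : ℝ} (hx : 0 < (f (x * Complex.I)).re)
    {z : ℂ} (hz : 0 < z.re) : 0 < (f z).re := by
  rcases (hnn z hz).lt_or_eq with h | h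
  · exact h
  exfalso
  have hopen : IsOpen {z : ℂ | 0 < z.re} := isOpen_lt continuous_const Complex.continuous_re
  have hconv : Convex ℝ {z : ℂ | 0 < z.re} := convex_halfSpace_re_gt 0
  have hd' : DiffContOnCl ℂ (fun s => Complex.exp (-(f s))) {z | 0 < z.re} := by
    refine ⟨?_, ?_⟩
    · have h1 := hd.1
      fun_prop
    · have h1 := hd.2
      fun_prop
  have := Complex.eqOn_closure_of_isPreconnected_of_isMaxOn_norm hconv.isPreconnected hopen hd' hz
    (by
      intro s hs
      have := hnn s hs
      simp only [Function.comp, Set.mem_setOf_eq, Complex.norm_exp]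
      apply Real.exp_le_exp.2
      simp [← h]
      exact this)
  have h2 := this (x := x * Complex.I) (by rw [Complex.closure_setOfPred_lt_re]; simp)
  have h3 := congrArg norm h2
  simp only [Function.const, Complex.norm_exp] at h3
  have h4 := Real.exp_injective h3
  simp only [Complex.neg_re] at h4
  linarith

lemma bdd_quot {N d : ℂ[X]} (hdeg : N.natDegree ≤ d.natDegree)
    (hp : ∀ s : ℂ, 0 ≤ s.re → d.eval s ≠ 0) :
    ∃ B, ∀ s : ℂ, 0 ≤ s.re → ‖N.eval s / d.eval s‖ ≤ B := by
  have hd0 : d ≠ 0 := by rintro rfl; exact hp 0 (by simp) (by simp)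
  have h1 := (tendsto_quot N d hdeg le_rfl (by simpa using hd0)).norm.eventually_lt_const (lt_add_one _)
  obtain ⟨K, hK, hKs⟩ := mem_cocompact.1 h1
  have hK2 : IsCompact (K ∩ {s : ℂ | 0 ≤ s.re}) :=
    hK.inter_right (isClosed_le continuous_const Complex.continuous_re)
  have hc : ContinuousOn (fun s => N.eval s / d.eval s) (K ∩ {s : ℂ | 0 ≤ s.re}) :=
    N.continuous.continuousOn.div d.continuous.continuousOn fun s hs => hp s hs.2
  obtain ⟨B, hB⟩ := hK2.exists_bound_of_continuousOn hc
  refine ⟨max B (‖N.coeff d.natDegree / d.coeff d.natDegree‖ + 1), fun s hs => ?_⟩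
  by_cases hsK : s ∈ K
  · exact (hB s ⟨hsK, hs⟩).trans (le_max_left _ _)
  · exact (hKs hsK).le.trans (le_max_right _ _)

lemma jw_eq (ω : ℝ) : jw ω = ω * Complex.I := by simp [jw, mul_comm]

lemma jw_inj {a b : ℝ} (h : jw a = jw b) : a = b := by
  simpa [jw] using h

lemma jw_re (ω : ℝ) : (jw ω).re = 0 := by simp [jw]

lemma jw_im (ω : ℝ) : (jw ω).im = ω := by simp [jw]

lemma eventually_cofinite_jw {p : ℂ → Prop} (h : ∀ᶠ s in cofinite, p s) :
    ∀ᶠ ω : ℝ in cofinite, p (jw ω) :=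
  (Function.Injective.tendsto_cofinite (fun _ _ h => jw_inj h)).eventually h

lemma nonneg_of_cofinite {g : ℝ → ℝ} (hg : Continuous g) (h : ∀ᶠ x in cofinite, 0 ≤ g x) (x : ℝ) :
    0 ≤ g x := by
  have h1 : ∀ᶠ y in 𝓝[≠] x, 0 ≤ g y := nhdsNE_le_cofinite x h
  exact ge_of_tendsto ((hg.tendsto x).mono_left nhdsWithin_le_nhds) h1

/-- Positive-real lemma for rational functions with simple poles on the imaginary axis. -/
lemma positive_real_aux (k : ℕ) : ∀ (N d : ℂ[X]), d.natDegree = k → d ≠ 0 →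
    N.natDegree ≤ d.natDegree → (∀ s : ℂ, 0 < s.re → d.eval s ≠ 0) →
    (∀ᶠ ω : ℝ in cofinite, 0 ≤ (N.eval (jw ω) / d.eval (jw ω)).re) →
    (∀ ω : ℝ, ∃ r : ℝ, 0 ≤ r ∧
      Tendsto (fun s => (s - jw ω) * (N.eval s / d.eval s)) (𝓝[≠] (jw ω)) (𝓝 (r : ℂ))) →
    ∀ s : ℂ, 0 < s.re → 0 ≤ (N.eval s / d.eval s).re := by
  induction k with
  | zero =>
    intro N d hdk hd0 hN hroot hnn _ s hs
    rw [hdk] at hN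
    rw [Polynomial.eq_C_of_natDegree_eq_zero hdk,
      Polynomial.eq_C_of_natDegree_eq_zero (Nat.le_zero.1 hN)] at hnn ⊢
    simp only [eval_C] at hnn ⊢
    exact hnn.exists.choose_spec
  | succ k ih =>
    intro N d hdk hd0 hN hroot hnn hres s hs
    by_cases hax : ∃ ω : ℝ, d.eval (jw ω) = 0
    · obtain ⟨ω, hω⟩ := hax
      obtain ⟨r, hr, hrt⟩ := hres ω
      obtain ⟨d1, rfl⟩ := Polynomial.dvd_iff_isRoot.2 hω
      have hd1 : d1 ≠ 0 := right_ne_zero_of_mul hd0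
      have hX : (X - C (jw ω) : ℂ[X]) ≠ 0 := Polynomial.X_sub_C_ne_zero _
      have hdk1 : d1.natDegree = k := by
        rw [Polynomial.natDegree_mul hX hd1, Polynomial.natDegree_X_sub_C] at hdk
        omega
      have hNr : (N - C (r:ℂ) * d1).eval (jw ω) = 0 := by
        have h1 : Tendsto (fun s => ((s - jw ω) * (N.eval s / ((X - C (jw ω)) * d1).eval s)) * d1.eval s)
            (𝓝[≠] (jw ω)) (𝓝 ((r:ℂ) * d1.eval (jw ω))) :=
          hrt.mul ((d1.continuous.tendsto _).mono_left nhdsWithin_le_nhds)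
        have h2 : Tendsto (fun s => N.eval s) (𝓝[≠] (jw ω)) (𝓝 (N.eval (jw ω))) :=
          (N.continuous.tendsto _).mono_left nhdsWithin_le_nhds
        have h3 : (fun s => ((s - jw ω) * (N.eval s / ((X - C (jw ω)) * d1).eval s)) * d1.eval s)
            =ᶠ[𝓝[≠] (jw ω)] fun s => N.eval s := by
          have h4 : ∀ᶠ s in 𝓝[≠] (jw ω), d1.eval s ≠ 0 :=
            nhdsNE_le_cofinite _ (poly_roots_finite hd1).eventually_cofinite_notMem
          filter_upwards [h4, self_mem_nhdsWithin] with s h4 h5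
          have h6 : s - jw ω ≠ 0 := sub_ne_zero.2 h5
          simp only [eval_mul, eval_sub, eval_X, eval_C]
          field_simp
        have := tendsto_nhds_unique (h1.congr' h3) h2
        simp [this]
      obtain ⟨N1, hN1⟩ := Polynomial.dvd_iff_isRoot.2 hNr
      have hNe : N = (X - C (jw ω)) * N1 + C (r:ℂ) * d1 := by rw [← hN1]; ring
      have hN1k : N1.natDegree ≤ d1.natDegree := by
        by_cases h0 : N1 = 0
        · simp [h0]
        have h1 : (N - C (r:ℂ) * d1).natDegree ≤ k + 1 := by
          refine (Polynomial.natDegree_sub_le _ _).trans (max_le (hN.trans hdk.le) ?_)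
          refine (Polynomial.natDegree_C_mul_le _ _).trans ?_
          omega
        rw [hN1, Polynomial.natDegree_mul hX h0, Polynomial.natDegree_X_sub_C] at h1
        omega
      -- relation between the two quotients
      have hrel : ∀ s, ((X - C (jw ω)) * d1).eval s ≠ 0 →
          N.eval s / ((X - C (jw ω)) * d1).eval s = N1.eval s / d1.eval s + r / (s - jw ω) := by
        intro s hs
        simp only [eval_mul, eval_sub, eval_X, eval_C] at hs
        have h1 := left_ne_zero_of_mul hs
        have h2 := right_ne_zero_of_mul hs
        rw [hNe]
        simp only [eval_mul, eval_sub, eval_X, eval_C, eval_add]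
        field_simp
      have hcof := (poly_roots_finite hd0).eventually_cofinite_notMem
      have ihs := ih N1 d1 hdk1 hd1 hN1k (fun s hs h => hroot s hs (by simp [h])) ?_ ?_ s hs
      · rw [hrel s (hroot s hs), Complex.add_re]
        have : 0 ≤ ((r:ℂ) / (s - jw ω)).re := by
          rw [Complex.div_re]
          simp [jw_re]
          exact div_nonneg (mul_nonneg hr hs.le) (Complex.normSq_nonneg _)
        linarith
      · filter_upwards [hnn, eventually_cofinite_jw hcof] with w h1 h2
        rw [hrel _ h2, Complex.add_re] at h1
        have : ((r:ℂ) / (jw w - jw ω)).re = 0 := by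
          rw [Complex.div_re]; simp [jw_re]
        linarith
      · intro w
        obtain ⟨r', hr', hrt'⟩ := hres w
        by_cases hw : w = ω
        · subst hw
          refine ⟨0, le_rfl, ?_⟩
          have h1 : Tendsto (fun s => (s - jw w) * (N.eval s / ((X - C (jw w)) * d1).eval s) - r)
            (𝓝[≠] jw w) (𝓝 ((r:ℂ) - r)) := hrt.sub_const _
          rw [sub_self] at h1
          rw [Complex.ofReal_zero]
          refine h1.congr' ?_
          filter_upwards [nhdsNE_le_cofinite _ hcof, self_mem_nhdsWithin] with s h2 h3
          have h6 : s - jw w ≠ 0 := sub_ne_zero.2 h3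
          rw [hrel s h2]
          field_simp
          ring
        · refine ⟨r', hr', ?_⟩
          have hne : jw w - jw ω ≠ 0 := sub_ne_zero.2 fun h => hw (jw_inj h)
          have h0 : Tendsto (fun s => (s - jw w) * ((r:ℂ) / (s - jw ω))) (𝓝[≠] jw w)
              (𝓝 ((jw w - jw w) * ((r:ℂ) / (jw w - jw ω)))) := by
            apply Tendsto.mono_left _ nhdsWithin_le_nhds
            have : ContinuousAt (fun s => (s - jw w) * ((r:ℂ) / (s - jw ω))) (jw w) := by
              fun_prop (disch := exact hne)
            exact this
          have h1 := hrt'.sub h0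
          simp only [sub_self, zero_mul, sub_zero] at h1
          refine h1.congr' ?_
          filter_upwards [nhdsNE_le_cofinite _ hcof] with s h2
          rw [hrel s h2]
          ring
    · push Not at hax
      have hroot' : ∀ s : ℂ, 0 ≤ s.re → d.eval s ≠ 0 := by
        intro s hs
        rcases hs.lt_or_eq with h | h
        · exact hroot s h
        · have : s = jw s.im := by
            apply Complex.ext <;> simp [jw_re, jw_im, ← h]
          rw [this]; exact hax _
      obtain ⟨B, hB⟩ := bdd_quot hN hroot'
      have hB0 : 0 ≤ B := (norm_nonneg _).trans (hB 0 (by simp))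
      refine re_nonneg_of_boundary (f := fun s => N.eval s / d.eval s) (B := B) ?_ ?_ ?_ ?_ hs.le
      · refine ⟨fun z hz => ?_, ?_⟩
        · exact (N.differentiableAt.div d.differentiableAt (hroot z hz)).differentiableWithinAt
        · rw [Complex.closure_setOfPred_lt_re]
          exact N.continuous.continuousOn.div d.continuous.continuousOn fun s hs => hroot' s hs
      · intro z hz
        refine (hB z hz).trans ?_
        nlinarith [norm_nonneg z]
      · intro x
        rw [← jw_eq]
        refine nonneg_of_cofinite (g := fun x => (N.eval (jw x) / d.eval (jw x)).re) ?_ hnn x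
        have hj : Continuous jw := by unfold jw; fun_prop
        exact Complex.continuous_re.comp
          ((N.continuous.comp hj).div (d.continuous.comp hj) hax)
      · intro ε hε
        filter_upwards [eventually_ge_atTop (max 0 (B / ε))] with t ht
        have h0 : 0 ≤ t := (le_max_left _ _).trans ht
        have h1 : B / ε ≤ t := (le_max_right _ _).trans ht
        rw [div_le_iff₀ hε] at h1
        have h2 := hB t (by simpa using h0)
        have h3 := abs_le.1 ((Complex.abs_re_le_norm _).trans h2)
        linarith [h3.1]

/-- Functions represented by a quotient of complex polynomials, without poles
in the open right half plane, proper. -/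
def Rep (f : ℂ → ℂ) : Prop :=
  ∃ N d : ℂ[X], d ≠ 0 ∧ N.natDegree ≤ d.natDegree ∧ (∀ s : ℂ, 0 < s.re → d.eval s ≠ 0) ∧
    ∀ s, d.eval s ≠ 0 → f s = N.eval s / d.eval s

lemma Rep.add {f g : ℂ → ℂ} (hf : Rep f) (hg : Rep g) : Rep (fun s => f s + g s) := by
  obtain ⟨N, d, h1, h2, h3, h4⟩ := hf
  obtain ⟨N', d', h1', h2', h3', h4'⟩ := hg
  refine ⟨N * d' + d * N', d * d', mul_ne_zero h1 h1', ?_, ?_, ?_⟩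
  · rw [Polynomial.natDegree_mul h1 h1']
    refine (Polynomial.natDegree_add_le _ _).trans (max_le ?_ ?_)
    · exact Polynomial.natDegree_mul_le.trans (by omega)
    · exact Polynomial.natDegree_mul_le.trans (by omega)
  · intro s hs; rw [eval_mul]; exact mul_ne_zero (h3 s hs) (h3' s hs)
  · intro s hs
    rw [eval_mul] at hs
    have a := left_ne_zero_of_mul hs
    have b := right_ne_zero_of_mul hs
    show f s + g s = _
    rw [h4 s a, h4' s b, div_add_div _ _ a b]
    simp

lemma Rep.mul {f g : ℂ → ℂ} (hf : Rep f) (hg : Rep g) : Rep (fun s => f s * g s) := by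
  obtain ⟨N, d, h1, h2, h3, h4⟩ := hf
  obtain ⟨N', d', h1', h2', h3', h4'⟩ := hg
  refine ⟨N * N', d * d', mul_ne_zero h1 h1', ?_, ?_, ?_⟩
  · rw [Polynomial.natDegree_mul h1 h1']
    exact Polynomial.natDegree_mul_le.trans (by omega)
  · intro s hs; rw [eval_mul]; exact mul_ne_zero (h3 s hs) (h3' s hs)
  · intro s hs
    rw [eval_mul] at hs
    have a := left_ne_zero_of_mul hs
    have b := right_ne_zero_of_mul hs
    show f s * g s = _
    rw [h4 s a, h4' s b, div_mul_div_comm]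
    simp

lemma Rep.const (c : ℂ) : Rep (fun _ => c) :=
  ⟨C c, 1, one_ne_zero, by simp, by simp, by simp⟩

lemma Rep.inv : Rep (fun s => s⁻¹) :=
  ⟨1, X, X_ne_zero, by simp, by intro s hs h; simp at h; simp [h] at hs, by simp⟩

lemma Rep.sum {ι : Type*} (t : Finset ι) {f : ι → ℂ → ℂ} (hf : ∀ i ∈ t, Rep (f i)) :
    Rep (fun s => ∑ i ∈ t, f i s) := by
  classical
  induction t using Finset.induction_on with
  | empty => simpa using Rep.const 0
  | insert a t ha ih =>
    simp only [Finset.sum_insert ha]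
    exact (hf a (by simp)).add (ih fun i hi => hf i (by simp [hi]))

lemma Rep.evalC {f : RatFunc ℝ} (h : f.num.degree ≤ f.denom.degree)
    (hp : ∀ s : ℂ, 0 < s.re → ¬ IsPoleAt f s) : Rep (evalC f) := by
  refine ⟨f.num.map (algebraMap ℝ ℂ), f.denom.map (algebraMap ℝ ℂ), map_ne_zero' f.denom_ne_zero,
    ?_, ?_, ?_⟩
  · rw [Polynomial.natDegree_map, Polynomial.natDegree_map]
    exact Polynomial.natDegree_le_natDegree h
  · intro s hs; rw [← eval₂_eq_eval_map]; exact hp s hs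
  · intro s _
    rw [← eval₂_eq_eval_map, ← eval₂_eq_eval_map]; rfl

lemma positive_real {f : ℂ → ℂ} (hf : Rep f)
    (hnn : ∀ᶠ ω : ℝ in cofinite, 0 ≤ (f (jw ω)).re)
    (hres : ∀ ω : ℝ, ∃ r : ℝ, 0 ≤ r ∧
      Tendsto (fun s => (s - jw ω) * f s) (𝓝[≠] (jw ω)) (𝓝 (r : ℂ)))
    {s : ℂ} (hs : 0 < s.re) : 0 ≤ (f s).re := by
  obtain ⟨N, d, h1, h2, h3, h4⟩ := hf
  rw [h4 s (h3 s hs)]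
  have hcof := (poly_roots_finite h1).eventually_cofinite_notMem
  refine positive_real_aux _ N d rfl h1 h2 h3 ?_ ?_ s hs
  · filter_upwards [hnn, eventually_cofinite_jw hcof] with w a b
    rwa [h4 _ b] at a
  · intro ω
    obtain ⟨r, hr, h⟩ := hres ω
    refine ⟨r, hr, h.congr' ?_⟩
    filter_upwards [nhdsNE_le_cofinite _ hcof] with s hs
    rw [h4 s hs]



/-- quadratic form -/
def qf (M : Matrix (Fin n) (Fin n) ℂ) (y : Fin n → ℂ) : ℂ := star y ⬝ᵥ (M *ᵥ y)

lemma star_dot (x y : Fin n → ℂ) : star (star x ⬝ᵥ y) = star y ⬝ᵥ x := by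
  rw [Matrix.star_dotProduct, star_star]

lemma qf_conjTranspose (M : Matrix (Fin n) (Fin n) ℂ) (y : Fin n → ℂ) :
    qf Mᴴ y = star (qf M y) := by
  unfold qf
  rw [star_dot, Matrix.star_mulVec, ← Matrix.dotProduct_mulVec]

lemma qf_add (M N : Matrix (Fin n) (Fin n) ℂ) (y : Fin n → ℂ) :
    qf (M + N) y = qf M y + qf N y := by
  simp [qf, Matrix.add_mulVec]

lemma qf_sub (M N : Matrix (Fin n) (Fin n) ℂ) (y : Fin n → ℂ) :
    qf (M - N) y = qf M y - qf N y := by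
  simp [qf, Matrix.sub_mulVec]

lemma qf_smul (c : ℂ) (M : Matrix (Fin n) (Fin n) ℂ) (y : Fin n → ℂ) :
    qf (c • M) y = c * qf M y := by
  simp [qf, Matrix.smul_mulVec]

lemma qf_map_star (M : Matrix (Fin n) (Fin n) ℂ) (y : Fin n → ℂ) :
    qf (M.map star) y = star (qf M (star y)) := by
  simp only [qf, dotProduct, Matrix.mulVec, Pi.star_apply, star_sum, star_mul', star_star, Matrix.map_apply]

lemma qf_niKer (M : Matrix (Fin n) (Fin n) ℂ) (y : Fin n → ℂ) :
    qf (niKer M) y = ((-2 * (qf M y).im : ℝ) : ℂ) := by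
  rw [niKer, qf_smul, qf_sub, qf_conjTranspose]
  apply Complex.ext <;> simp
  ring

lemma niKer_herm (M : Matrix (Fin n) (Fin n) ℂ) : (niKer M).IsHermitian := by
  simp only [niKer, Matrix.IsHermitian, Matrix.conjTranspose_smul, Matrix.conjTranspose_sub,
    Matrix.conjTranspose_conjTranspose, Complex.star_def, Complex.conj_I]
  rw [neg_smul, ← smul_neg, neg_sub]

lemma niKer_psd {M : Matrix (Fin n) (Fin n) ℂ} :
    (niKer M).PosSemidef ↔ ∀ y, (qf M y).im ≤ 0 := by
  rw [Matrix.posSemidef_iff_dotProduct_mulVec]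
  constructor
  · rintro ⟨-, h⟩ y
    have := h y
    change 0 ≤ qf (niKer M) y at this
    rw [qf_niKer, Complex.zero_le_real] at this
    linarith
  · intro h
    refine ⟨niKer_herm M, fun y => ?_⟩
    change 0 ≤ qf (niKer M) y
    rw [qf_niKer, Complex.zero_le_real]
    linarith [h y]

lemma niKer_pd {M : Matrix (Fin n) (Fin n) ℂ} :
    (niKer M).PosDef ↔ ∀ y, y ≠ 0 → (qf M y).im < 0 := by
  rw [Matrix.posDef_iff_dotProduct_mulVec]
  constructor
  · rintro ⟨-, h⟩ y hy
    have := h hy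
    change 0 < qf (niKer M) y at this
    rw [qf_niKer, Complex.zero_lt_real] at this
    linarith
  · intro h
    refine ⟨niKer_herm M, fun y hy => ?_⟩
    change 0 < qf (niKer M) y
    rw [qf_niKer, Complex.zero_lt_real]
    linarith [h y hy]

lemma psd_qf {R : Matrix (Fin n) (Fin n) ℂ} (h : R.PosSemidef) (y : Fin n → ℂ) :
    ∃ r : ℝ, 0 ≤ r ∧ qf R y = r := by
  have := h.dotProduct_mulVec_nonneg y
  change 0 ≤ qf R y at this
  rw [Complex.le_def] at this
  refine ⟨(qf R y).re, this.1, ?_⟩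
  apply Complex.ext <;> simp [← this.2]

lemma pd_qf {R : Matrix (Fin n) (Fin n) ℂ} (h : R.PosDef) {y : Fin n → ℂ} (hy : y ≠ 0) :
    ∃ r : ℝ, 0 < r ∧ qf R y = r := by
  have := h.dotProduct_mulVec_pos hy
  change 0 < qf R y at this
  rw [Complex.lt_def] at this
  refine ⟨(qf R y).re, this.1, ?_⟩
  apply Complex.ext <;> simp [← this.2]

/-- complexification -/
def cx (A : Matrix (Fin n) (Fin n) ℝ) : Matrix (Fin n) (Fin n) ℂ := A.map Complex.ofReal

lemma cx_mul (A B : Matrix (Fin n) (Fin n) ℝ) : cx (A * B) = cx A * cx B := by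
  exact Matrix.map_mul (f := Complex.ofRealHom) (L := A) (M := B)

lemma cx_sub (A B : Matrix (Fin n) (Fin n) ℝ) : cx (A - B) = cx A - cx B := by
  ext; simp [cx]

lemma cx_add (A B : Matrix (Fin n) (Fin n) ℝ) : cx (A + B) = cx A + cx B := by
  ext; simp [cx]

lemma cx_smul (c : ℝ) (A : Matrix (Fin n) (Fin n) ℝ) : cx (c • A) = (c : ℂ) • cx A := by
  ext; simp [cx]

lemma cx_one : cx (1 : Matrix (Fin n) (Fin n) ℝ) = 1 := by
  ext i j; simp [cx, Matrix.one_apply]; split_ifs <;> simp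

lemma cx_conjTranspose (A : Matrix (Fin n) (Fin n) ℝ) : (cx A)ᴴ = cx (Aᵀ) := by
  ext; simp [cx]

lemma cx_det (A : Matrix (Fin n) (Fin n) ℝ) : (cx A).det = (A.det : ℂ) := by
  have := RingHom.map_det Complex.ofRealHom A
  exact this.symm

lemma qf_cx_re (A : Matrix (Fin n) (Fin n) ℝ) (y : Fin n → ℂ) :
    (qf (cx A) y).re = (fun i => (y i).re) ⬝ᵥ (A *ᵥ fun i => (y i).re) +
      (fun i => (y i).im) ⬝ᵥ (A *ᵥ fun i => (y i).im) := by
  simp only [qf, cx, dotProduct, Matrix.mulVec, Matrix.map_apply, Pi.star_apply, Complex.re_sum,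
    Finset.mul_sum, ← Finset.sum_add_distrib]
  refine Finset.sum_congr rfl fun i _ => Finset.sum_congr rfl fun j _ => ?_
  simp

lemma qf_cx_im {A : Matrix (Fin n) (Fin n) ℝ} (hA : A.IsSymm) (y : Fin n → ℂ) :
    (qf (cx A) y).im = 0 := by
  have := qf_conjTranspose (cx A) y
  rw [cx_conjTranspose, hA.eq] at this
  have := congrArg Complex.im this
  simp at this
  linarith

lemma cx_psd {A : Matrix (Fin n) (Fin n) ℝ} (h : A.PosSemidef) : (cx A).PosSemidef := by
  have hs : A.IsSymm := by simpa [Matrix.IsHermitian, Matrix.IsSymm] using h.isHermitian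
  refine Matrix.PosSemidef.of_dotProduct_mulVec_nonneg ?_ fun y => ?_
  · rw [Matrix.IsHermitian, cx_conjTranspose, hs.eq]
  · change 0 ≤ qf (cx A) y
    rw [Complex.le_def]
    refine ⟨?_, by simp [qf_cx_im hs]⟩
    rw [qf_cx_re]
    have h1 := h.dotProduct_mulVec_nonneg (fun i => (y i).re)
    have h2 := h.dotProduct_mulVec_nonneg (fun i => (y i).im)
    simp only [star_trivial] at h1 h2
    exact add_nonneg h1 h2

lemma cx_pd {A : Matrix (Fin n) (Fin n) ℝ} (h : A.PosDef) : (cx A).PosDef := by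
  refine (cx_psd h.posSemidef).posDef_iff_isUnit.2 ?_
  rw [Matrix.isUnit_iff_isUnit_det, cx_det, isUnit_iff_ne_zero]
  exact_mod_cast h.det_pos.ne'

lemma cx_mulVec (A : Matrix (Fin n) (Fin n) ℝ) (x : Fin n → ℝ) :
    cx A *ᵥ (fun i => (x i : ℂ)) = fun i => ((A *ᵥ x) i : ℂ) := by
  ext i; simp [cx, Matrix.mulVec, dotProduct]

lemma qf_cx (A : Matrix (Fin n) (Fin n) ℝ) (x : Fin n → ℝ) :
    qf (cx A) (fun i => (x i : ℂ)) = ((x ⬝ᵥ (A *ᵥ x) : ℝ) : ℂ) := by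
  rw [qf, cx_mulVec]; simp [dotProduct]

/-- squared norm -/
def nsq (y : Fin n → ℂ) : ℝ := ∑ i, ‖y i‖ ^ 2

lemma star_dot_self (y : Fin n → ℂ) : star y ⬝ᵥ y = (nsq y : ℂ) := by
  simp only [dotProduct, nsq, Pi.star_apply, Complex.ofReal_sum]
  congr 1; ext i
  rw [Complex.star_def, mul_comm, Complex.mul_conj, Complex.normSq_eq_norm_sq]

lemma qf_one (y : Fin n → ℂ) : qf 1 y = (nsq y : ℂ) := by
  rw [qf, Matrix.one_mulVec, star_dot_self]

lemma nsq_nonneg (y : Fin n → ℂ) : 0 ≤ nsq y := by unfold nsq; positivity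

lemma nsq_pos {y : Fin n → ℂ} (hy : y ≠ 0) : 0 < nsq y := by
  obtain ⟨i, hi⟩ := Function.ne_iff.1 hy
  refine Finset.sum_pos' (fun _ _ => by positivity) ⟨i, Finset.mem_univ _, ?_⟩
  have : ‖y i‖ ≠ 0 := by simpa using hi
  positivity

lemma tendsto_qf {α : Type*} {l : Filter α} {M : α → Matrix (Fin n) (Fin n) ℂ} {M0}
    (h : Tendsto M l (𝓝 M0)) (y : Fin n → ℂ) :
    Tendsto (fun s => qf (M s) y) l (𝓝 (qf M0 y)) := by
  have : Continuous fun M : Matrix (Fin n) (Fin n) ℂ => qf M y := by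
    unfold qf; fun_prop
  exact (this.tendsto _).comp h

lemma Rep.qf {P : Matrix (Fin n) (Fin n) (RatFunc ℝ)} (hP : Proper P)
    (hp : ∀ s : ℂ, 0 < s.re → Reg P s) (y : Fin n → ℂ) :
    Rep (fun s => qf (evalM P s) y) := by
  simp only [NIControl.qf, dotProduct, Matrix.mulVec]
  refine Rep.sum _ fun i _ => (Rep.const _).mul (Rep.sum _ fun j _ => ?_)
  exact (Rep.evalC (hP i j) fun s hs => hp s hs i j).mul (Rep.const _)

/-- axis nonnegativity for NI -/
lemma ni_im {P : Matrix (Fin n) (Fin n) (RatFunc ℝ)} (hP : IsNI P) {ω : ℝ} (hω : 0 < ω)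
    (hr : Reg P (jw ω)) (y : Fin n → ℂ) : (qf (evalM P (jw ω)) y).im ≤ 0 :=
  niKer_psd.1 (hP.2.2.1 ω hω (reg_iff.1 hr)) y

lemma Reg.conj {P : Matrix (Fin n) (Fin n) (RatFunc ℝ)} {s : ℂ} (h : Reg P (star s)) : Reg P s :=
  fun i j hp => h i j (pole_conj.2 hp)

lemma qf_jw_neg (P : Matrix (Fin n) (Fin n) (RatFunc ℝ)) (s : ℂ) (y : Fin n → ℂ) :
    qf (evalM P (star s)) y = star (qf (evalM P s) (star y)) := by
  rw [evalM_conj, qf_map_star]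

lemma ni_axis {P : Matrix (Fin n) (Fin n) (RatFunc ℝ)} (hP : IsNI P) {ω : ℝ}
    (hr : Reg P (jw ω)) (y : Fin n → ℂ) (hω : ω ≠ 0) :
    ω * (qf (evalM P (jw ω)) y).im ≤ 0 := by
  rcases hω.lt_or_gt with h | h
  · have h1 : jw ω = star (jw (-ω)) := by rw [← jw_neg, neg_neg]
    have := ni_im hP (ω := -ω) (by linarith) (Reg.conj (h1 ▸ hr)) (star y)
    rw [h1, qf_jw_neg]
    simp only [Complex.star_def, Complex.conj_im]
    nlinarith
  · exact mul_nonpos_of_nonneg_of_nonpos h.le (ni_im hP h hr y)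

/-- residues for NI -/
lemma ni_res {P : Matrix (Fin n) (Fin n) (RatFunc ℝ)} (hP : IsNI P) {ω : ℝ} (hω : 0 < ω)
    (y : Fin n → ℂ) : ∃ r : ℝ, 0 ≤ r ∧
    Tendsto (fun s => (s - jw ω) * (Complex.I * qf (evalM P s) y)) (𝓝[≠] jw ω) (𝓝 (r:ℂ)) := by
  by_cases h : HasPole P (jw ω)
  · obtain ⟨R, hR, ht⟩ := hP.2.2.2.1 ω hω h
    obtain ⟨r, hr, e⟩ := psd_qf hR y
    refine ⟨r, hr, ?_⟩
    have := tendsto_qf ht y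
    simpa only [qf_smul, e] using this
  · refine ⟨0, le_rfl, ?_⟩
    have h1 := tendsto_qf (continuousAt_evalM (reg_iff.2 h)) y
    have h2 : Tendsto (fun s => (s - jw ω)) (𝓝 (jw ω)) (𝓝 (jw ω - jw ω)) :=
      (continuous_id.sub continuous_const).tendsto _
    have := h2.mul (h1.const_mul Complex.I)
    simp only [sub_self, zero_mul] at this
    simpa using this.mono_left nhdsWithin_le_nhds

lemma tendsto_star_punct (z : ℂ) : Tendsto (star : ℂ → ℂ) (𝓝[≠] star z) (𝓝[≠] z) := by
  refine tendsto_nhdsWithin_iff.2 ⟨?_, ?_⟩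
  · have := (continuous_star (R := ℂ)).tendsto (star z)
    rw [star_star] at this
    exact this.mono_left nhdsWithin_le_nhds
  · filter_upwards [self_mem_nhdsWithin] with s hs h
    exact hs (by rw [Set.mem_singleton_iff] at *; rw [← h, star_star])

lemma ni_pr {P : Matrix (Fin n) (Fin n) (RatFunc ℝ)} (hP : IsNI P) (h0 : Reg P 0)
    {Γ : Matrix (Fin n) (Fin n) ℝ} (hΓ : Γ.IsSymm) (hle : LoewnerLE (evalR P 0) Γ)
    (y : Fin n → ℂ) {s : ℂ} (hs : 0 < s.re) :
    0 ≤ ((qf (cx Γ) y - qf (evalM P s) y) / s).re := by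
  have hreg : ∀ s : ℂ, 0 < s.re → Reg P s := fun s hs => reg_iff.2 (hP.2.1 s hs)
  have hreal : (qf (cx Γ) y).im = 0 := qf_cx_im hΓ y
  have hg : ∀ᶠ s : ℂ in cofinite, Reg P s := (gen_of_le_cofinite le_rfl).reg P
  simp only [div_eq_mul_inv]
  refine positive_real (f := fun s => (qf (cx Γ) y - qf (evalM P s) y) * s⁻¹) ?_ ?_ ?_ hs
  · have := ((Rep.const (qf (cx Γ) y)).add ((Rep.const (-1)).mul (Rep.qf hP.1 hreg y))).mul Rep.inv
    simpa [sub_eq_add_neg] using this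
  · filter_upwards [eventually_cofinite_jw hg, (Set.finite_singleton (0:ℝ)).eventually_cofinite_notMem] with ω hr hω
    have hω : ω ≠ 0 := by simpa using hω
    have h1 := ni_axis hP hr y hω
    have : ((qf (cx Γ) y - qf (evalM P (jw ω)) y) * (jw ω)⁻¹).re =
        -(ω * (qf (evalM P (jw ω)) y).im) / ω ^ 2 := by
      rw [← div_eq_mul_inv, Complex.div_re]
      simp [jw_re, jw_im, Complex.normSq_apply, hreal]
      field_simp
    rw [this]
    apply div_nonneg (by linarith) (by positivity)
  · intro ω
    rcases lt_trichotomy ω 0 with h | h | h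
    · obtain ⟨r, hr, ht⟩ := ni_res hP (ω := -ω) (by linarith) (star y)
      refine ⟨r / (-ω), div_nonneg hr (by linarith), ?_⟩
      have h1 : jw ω = star (jw (-ω)) := by rw [← jw_neg, neg_neg]
      have h2 := (continuous_star (R := ℂ)).tendsto _ |>.comp (ht.comp (h1 ▸ tendsto_star_punct (jw (-ω))))
      have h3 : Tendsto (fun s => (s - jw ω) * (-Complex.I * qf (evalM P s) y)) (𝓝[≠] jw ω) (𝓝 (r:ℂ)) := by
        have e : (star (r:ℂ)) = r := Complex.conj_ofReal r
        rw [e] at h2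
        refine h2.congr fun s => ?_
        simp only [Function.comp, star_mul', star_sub, star_star, ← h1]
        rw [qf_jw_neg]
        simp
      have hne : jw ω ≠ 0 := fun h' => h.ne (jw_inj (h'.trans (by simp [jw])))
      have h4 : Tendsto (fun s : ℂ => s⁻¹) (𝓝[≠] jw ω) (𝓝 (jw ω)⁻¹) :=
        (continuousAt_inv₀ hne).tendsto.mono_left nhdsWithin_le_nhds
      have h5 : Tendsto (fun s : ℂ => (s - jw ω) * qf (cx Γ) y) (𝓝[≠] jw ω) (𝓝 ((jw ω - jw ω) * qf (cx Γ) y)) :=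
        (((continuous_id.sub continuous_const).mul continuous_const).tendsto _).mono_left nhdsWithin_le_nhds
      have h6 := (h5.sub (h3.const_mul Complex.I)).mul h4
      have e : ((jw ω - jw ω) * qf (cx Γ) y - Complex.I * r) * (jw ω)⁻¹ = ((r / (-ω) : ℝ) : ℂ) := by
        have : (ω:ℂ) ≠ 0 := by exact_mod_cast h.ne
        simp only [jw, sub_self, zero_mul, zero_sub, mul_inv, Complex.inv_I]
        push_cast
        field_simp
        linear_combination (r:ℂ) * Complex.I_sq
      rw [e] at h6
      refine h6.congr fun s => ?_
      linear_combination (- (s - jw ω) * qf (evalM P s) y * s⁻¹) * (-Complex.I_sq)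
    · subst h
      have h7 : jw 0 = 0 := by simp [jw]
      obtain ⟨r, hr, e⟩ := psd_qf (cx_psd hle) y
      refine ⟨r, hr, ?_⟩
      rw [cx_sub, qf_sub] at e
      have h1 := tendsto_qf (continuousAt_evalM h0) y
      rw [evalM_zero_real] at h1
      have h2 := (h1.const_sub (qf (cx Γ) y)).mono_left (nhdsWithin_le_nhds (s := {0}ᶜ))
      rw [h7]
      change Tendsto _ _ (𝓝 (qf (cx Γ) y - qf (cx (evalR P 0)) y)) at h2
      rw [e] at h2
      refine h2.congr' ?_
      filter_upwards [self_mem_nhdsWithin] with s hs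
      have : s ≠ 0 := hs
      field_simp
      ring
    · obtain ⟨r, hr, h3⟩ := ni_res hP h y
      refine ⟨r / ω, div_nonneg hr h.le, ?_⟩
      have hne : jw ω ≠ 0 := fun h' => h.ne' (jw_inj (h'.trans (by simp [jw])))
      have h4 : Tendsto (fun s : ℂ => s⁻¹) (𝓝[≠] jw ω) (𝓝 (jw ω)⁻¹) :=
        (continuousAt_inv₀ hne).tendsto.mono_left nhdsWithin_le_nhds
      have h5 : Tendsto (fun s : ℂ => (s - jw ω) * qf (cx Γ) y) (𝓝[≠] jw ω) (𝓝 ((jw ω - jw ω) * qf (cx Γ) y)) :=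
        (((continuous_id.sub continuous_const).mul continuous_const).tendsto _).mono_left nhdsWithin_le_nhds
      have h6 := (h5.add (h3.const_mul Complex.I)).mul h4
      have e : ((jw ω - jw ω) * qf (cx Γ) y + Complex.I * r) * (jw ω)⁻¹ = ((r / ω : ℝ) : ℂ) := by
        have : (ω:ℂ) ≠ 0 := by exact_mod_cast h.ne'
        simp only [jw, sub_self, zero_mul, zero_add, mul_inv, Complex.inv_I]
        push_cast
        field_simp
        linear_combination -(r:ℂ) * Complex.I_sq
      rw [e] at h6
      refine h6.congr fun s => ?_
      linear_combination ((s - jw ω) * qf (evalM P s) y * s⁻¹) * (Complex.I_sq)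



/-- `0 ≤ A < γ⁻¹`, complex form. -/
structure Nice (A : Matrix (Fin n) (Fin n) ℝ) (γ : ℝ) : Prop where
  symm : A.IsSymm
  nonneg : ∀ y, 0 ≤ (qf (cx A) y).re
  lt : ∀ y, y ≠ 0 → γ * (qf (cx A) y).re < nsq y

lemma dot_symm {A : Matrix (Fin n) (Fin n) ℝ} (hA : A.IsSymm) (x y : Fin n → ℂ) :
    star x ⬝ᵥ (cx A *ᵥ y) = star (cx A *ᵥ x) ⬝ᵥ y := by
  rw [Matrix.star_mulVec, ← Matrix.dotProduct_mulVec, cx_conjTranspose, hA.eq]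

lemma Nice.expand {A : Matrix (Fin n) (Fin n) ℝ} {γ : ℝ} (h : Nice A γ) (x : Fin n → ℂ) :
    0 ≤ (qf (cx A) x).re - 2 * γ * nsq (cx A *ᵥ x) + γ ^ 2 * (qf (cx A) (cx A *ᵥ x)).re := by
  have h1 := h.nonneg (x - (γ:ℂ) • (cx A *ᵥ x))
  have : qf (cx A) (x - (γ:ℂ) • (cx A *ᵥ x)) = qf (cx A) x - ((2 * γ * nsq (cx A *ᵥ x) : ℝ) : ℂ)
      + ((γ ^ 2 : ℝ) : ℂ) * qf (cx A) (cx A *ᵥ x) := by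
    have e1 : star x ⬝ᵥ (cx A *ᵥ (cx A *ᵥ x)) = (nsq (cx A *ᵥ x) : ℂ) := by
      rw [dot_symm h.symm, star_dot_self]
    simp only [qf, Matrix.mulVec_sub, Matrix.mulVec_smul, star_sub, star_smul, sub_dotProduct,
      dotProduct_sub, smul_dotProduct, dotProduct_smul, e1, star_dot_self, Complex.star_def,
      Complex.conj_ofReal, smul_eq_mul]
    push_cast
    ring
  rw [this] at h1
  simpa only [Complex.add_re, Complex.sub_re, Complex.ofReal_re, Complex.re_ofReal_mul] using h1

lemma Nice.strict {A : Matrix (Fin n) (Fin n) ℝ} {γ : ℝ} (hγ : 0 < γ) (h : Nice A γ)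
    (x : Fin n → ℂ) (hy : cx A *ᵥ x ≠ 0) : γ * nsq (cx A *ᵥ x) < (qf (cx A) x).re := by
  have h1 := h.expand x
  have h2 := mul_lt_mul_of_pos_left (h.lt _ hy) hγ
  nlinarith

lemma Nice.weak {A : Matrix (Fin n) (Fin n) ℝ} {γ : ℝ} (hγ : 0 < γ) (h : Nice A γ)
    (x : Fin n → ℂ) : γ * nsq (cx A *ᵥ x) ≤ (qf (cx A) x).re := by
  by_cases hy : cx A *ᵥ x = 0
  · rw [hy]; simp [nsq]; exact h.nonneg x
  · exact (h.strict hγ x hy).le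

lemma det_ne_zero_of_ker {M : Matrix (Fin n) (Fin n) ℂ} (h : ∀ x, M *ᵥ x = 0 → x = 0) :
    M.det ≠ 0 := by
  intro h0
  obtain ⟨v, hv, hv'⟩ := Matrix.exists_mulVec_eq_zero_iff.2 h0
  exact hv (h v hv')

lemma ker_of_det {M : Matrix (Fin n) (Fin n) ℂ} (h : M.det ≠ 0) {x : Fin n → ℂ}
    (hx : M *ᵥ x = 0) : x = 0 := by
  by_contra h'
  exact h (Matrix.exists_mulVec_eq_zero_iff.1 ⟨x, h', hx⟩)

lemma Nice.det {A : Matrix (Fin n) (Fin n) ℝ} {γ : ℝ} (hγ : 0 < γ) (h : Nice A γ)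
    {Q : Matrix (Fin n) (Fin n) ℂ} (hQ : ∀ y, (qf Q y).re ≤ γ * nsq y) :
    (1 - Q * cx A).det ≠ 0 := by
  apply det_ne_zero_of_ker
  intro x hx
  rw [Matrix.sub_mulVec, Matrix.one_mulVec, ← Matrix.mulVec_mulVec, sub_eq_zero] at hx
  by_contra hx0
  have hy : cx A *ᵥ x ≠ 0 := by
    intro h0; rw [h0, Matrix.mulVec_zero] at hx; exact hx0 hx
  have h1 := hQ (cx A *ᵥ x)
  have h2 := h.strict hγ x hy
  have h3 : qf Q (cx A *ᵥ x) = star (qf (cx A) x) := by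
    rw [qf, ← hx, qf, star_dot]
  rw [h3] at h1
  simp at h1
  linarith

lemma sni_ni {C : Matrix (Fin n) (Fin n) (RatFunc ℝ)} (h : IsSNI C) : IsNI C := by
  have hr : ∀ s : ℂ, 0 ≤ s.re → Reg C s := fun s hs => h.1.2 s hs
  refine ⟨h.1.1, fun s hs => reg_iff.1 (hr s hs.le), fun ω hω _ => (h.2 ω hω).posSemidef,
    fun ω hω hp => ?_, fun hp => ?_⟩
  · exact absurd hp (reg_iff.1 (hr _ (by simp [jw_re])))
  · exact absurd hp (reg_iff.1 (hr _ (by simp)))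

lemma tendsto_ofReal_cocompact : Tendsto (fun t : ℝ => (t : ℂ)) atTop (cocompact ℂ) := by
  have : Tendsto (fun t : ℝ => (t : ℂ)) (cocompact ℝ) (cocompact ℂ) :=
    Complex.isometry_ofReal.isClosedEmbedding.tendsto_cocompact
  exact this.mono_left atTop_le_cocompact

lemma ni_inf {P : Matrix (Fin n) (Fin n) (RatFunc ℝ)} (hP : IsNI P) (h0 : Reg P 0)
    {Γ : Matrix (Fin n) (Fin n) ℝ} (hΓ : Γ.IsSymm) (hle : LoewnerLE (evalR P 0) Γ)
    (y : Fin n → ℂ) : (qf (cx (evalInf P)) y).re ≤ (qf (cx Γ) y).re := by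
  have h1 := (tendsto_qf (tendsto_evalInf hP.1) y).comp tendsto_ofReal_cocompact
  have h2 := (Complex.continuous_re.tendsto _).comp h1
  refine le_of_tendsto h2 ?_
  filter_upwards [eventually_gt_atTop 0] with t ht
  have := ni_pr hP h0 hΓ hle y (s := (t:ℂ)) (by simpa using ht)
  rw [Complex.div_ofReal_re] at this
  have := mul_nonneg this ht.le
  rw [div_mul_cancel₀ _ ht.ne', Complex.sub_re] at this
  simp only [Function.comp]
  linarith

lemma symm_of_lt {A : Matrix (Fin n) (Fin n) ℝ} {c : ℝ} (h : LoewnerLT A (c • 1)) : A.IsSymm := by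
  have := h.isHermitian
  rw [Matrix.IsHermitian, Matrix.conjTranspose_sub, Matrix.conjTranspose_smul,
    Matrix.conjTranspose_one, star_trivial] at this
  have := sub_right_injective this
  simpa [Matrix.IsSymm] using this

lemma psd_symm {A : Matrix (Fin n) (Fin n) ℝ} (h : A.PosSemidef) : A.IsSymm := by
  simpa [Matrix.IsHermitian, Matrix.IsSymm] using h.isHermitian

lemma qf_cx_smul_one (c : ℝ) (y : Fin n → ℂ) : qf (cx (c • 1)) y = ((c * nsq y : ℝ) : ℂ) := by
  rw [cx_smul, cx_one, qf_smul, qf_one]; push_cast; rfl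

lemma smul_one_symm (c : ℝ) : (c • (1 : Matrix (Fin n) (Fin n) ℝ)).IsSymm := by
  simp [Matrix.IsSymm]

section suff
variable {C : Matrix (Fin n) (Fin n) (RatFunc ℝ)} {γ : ℝ}

lemma c_le
    (hγ : 0 < γ) (hC : IsSNI C) (hinf : (evalInf C).PosSemidef)
    (h0 : LoewnerLT (evalR C 0) (γ⁻¹ • 1)) (y : Fin n → ℂ) : (qf (cx (evalInf C)) y).re ≤ (qf (cx (evalR C 0)) y).re := by
  refine ni_inf (sni_ni hC) (hC.1.2 0 (by simp)) (symm_of_lt h0) ?_ y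
  rw [LoewnerLE, sub_self]; exact Matrix.PosSemidef.zero

lemma nice_inf_zero
    (hγ : 0 < γ) (hC : IsSNI C) (hinf : (evalInf C).PosSemidef)
    (h0 : LoewnerLT (evalR C 0) (γ⁻¹ • 1)) : Nice (evalInf C) γ ∧ Nice (evalR C 0) γ := by
  have a : ∀ y, 0 ≤ (qf (cx (evalInf C)) y).re := by
    intro y; obtain ⟨r, hr, e⟩ := psd_qf (cx_psd hinf) y; rw [e]; simpa using hr
  have b : ∀ y, y ≠ 0 → γ * (qf (cx (evalR C 0)) y).re < nsq y := by
    intro y hy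
    obtain ⟨r, hr, e⟩ := pd_qf (cx_pd h0) hy
    rw [cx_sub, qf_sub, qf_cx_smul_one] at e
    have := congrArg Complex.re e
    simp only [Complex.sub_re, Complex.ofReal_re] at this
    have h2 : (qf (cx (evalR C 0)) y).re < γ⁻¹ * nsq y := by linarith
    calc _ < γ * (γ⁻¹ * nsq y) := mul_lt_mul_of_pos_left h2 hγ
      _ = nsq y := by field_simp
  have c := c_le hγ hC hinf h0
  exact ⟨⟨psd_symm hinf, a, fun y hy => lt_of_le_of_lt (mul_le_mul_of_nonneg_left (c y) hγ.le) (b y hy)⟩,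
    ⟨symm_of_lt h0, fun y => (a y).trans (c y), b⟩⟩

end suff

lemma sni_axis {P : Matrix (Fin n) (Fin n) (RatFunc ℝ)} (hP : IsSNI P) {ω : ℝ}
    {y : Fin n → ℂ} (hy : y ≠ 0) (hω : ω ≠ 0) :
    ω * (qf (evalM P (jw ω)) y).im < 0 := by
  rcases hω.lt_or_gt with h | h
  · have h1 : jw ω = star (jw (-ω)) := by rw [← jw_neg, neg_neg]
    have := niKer_pd.1 (hP.2 (-ω) (by linarith)) (star y) (by simpa using hy)
    rw [h1, qf_jw_neg]
    simp only [Complex.star_def, Complex.conj_im]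
    nlinarith
  · exact mul_neg_of_pos_of_neg h (niKer_pd.1 (hP.2 ω h) y hy)

lemma reg_of_tendsto {X : Matrix (Fin n) (Fin n) (RatFunc ℝ)} {s : ℂ}
    {X0 : Matrix (Fin n) (Fin n) ℂ} (h : Tendsto (evalM X) (𝓝[≠] s) (𝓝 X0)) : Reg X s :=
  fun i j => not_pole_of_bdd (bdd_of_tendsto (tendsto_entry h i j))

lemma proper_of_tendsto {X : Matrix (Fin n) (Fin n) (RatFunc ℝ)}
    {X0 : Matrix (Fin n) (Fin n) ℂ} (h : Tendsto (evalM X) (cocompact ℂ) (𝓝 X0)) : Proper X :=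
  fun i j => proper_of_bdd (bdd_of_tendsto (tendsto_entry h i j))

lemma Reg.tendsto {X : Matrix (Fin n) (Fin n) (RatFunc ℝ)} {s : ℂ} (h : Reg X s) :
    Tendsto (evalM X) (𝓝[≠] s) (𝓝 (evalM X s)) :=
  (continuousAt_evalM h).tendsto.mono_left nhdsWithin_le_nhds

/-- `1 - γ C`. -/
def Mg (γ : ℝ) (C : Matrix (Fin n) (Fin n) (RatFunc ℝ)) : Matrix (Fin n) (Fin n) (RatFunc ℝ) :=
  1 - cM (γ • 1) * C

/-- `(1 - γ C)⁻¹ C`. -/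
def Ct (γ : ℝ) (C : Matrix (Fin n) (Fin n) (RatFunc ℝ)) : Matrix (Fin n) (Fin n) (RatFunc ℝ) :=
  (Mg γ C)⁻¹ * C

lemma reg_Mg {γ : ℝ} {C : Matrix (Fin n) (Fin n) (RatFunc ℝ)} {s : ℂ} (h : Reg C s) :
    Reg (Mg γ C) s := Reg.one.sub ((Reg.cM _).mul h)

lemma eval_Mg {γ : ℝ} {C : Matrix (Fin n) (Fin n) (RatFunc ℝ)} {s : ℂ} (h : Reg C s) :
    evalM (Mg γ C) s = 1 - (γ:ℂ) • evalM C s := by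
  rw [Mg, evalM_sub Reg.one ((Reg.cM _).mul h), evalM_mul (Reg.cM _) h, evalM_one, evalM_cM]
  change 1 - cx _ * _ = _
  rw [cx_smul, cx_one, smul_mul_assoc, one_mul]

section suff
variable {C : Matrix (Fin n) (Fin n) (RatFunc ℝ)} {γ : ℝ}

lemma Mg_det
    (hγ : 0 < γ) (hC : IsSNI C) (hinf : (evalInf C).PosSemidef)
    (h0 : LoewnerLT (evalR C 0) (γ⁻¹ • 1)) {s : ℂ} (hs : 0 ≤ s.re) : (1 - (γ:ℂ) • evalM C s).det ≠ 0 := by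
  apply det_ne_zero_of_ker
  intro x hx
  by_contra hx0
  have hnx := nsq_pos hx0
  have hq : (γ:ℂ) * qf (evalM C s) x = (nsq x : ℂ) := by
    rw [Matrix.sub_mulVec, Matrix.one_mulVec, sub_eq_zero] at hx
    rw [← qf_smul, qf, ← hx, star_dot_self]
  have hγ' : (γ:ℂ) ≠ 0 := by exact_mod_cast hγ.ne'
  have hq' : qf (evalM C s) x = ((nsq x / γ : ℝ) : ℂ) := by
    push_cast; rw [← hq]; field_simp
  have hn := (nice_inf_zero hγ hC hinf h0).2
  rcases hs.lt_or_eq with h | h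
  · have h1 := ni_pr (sni_ni hC) (hC.1.2 0 (by simp)) hn.symm
      (by rw [LoewnerLE, sub_self]; exact Matrix.PosSemidef.zero) x h
    have h2 := hn.lt x hx0
    have e : qf (cx (evalR C 0)) x = (((qf (cx (evalR C 0)) x).re : ℝ) : ℂ) := by
      apply Complex.ext <;> simp [qf_cx_im hn.symm]
    rw [hq', e, ← Complex.ofReal_sub, Complex.div_re] at h1
    simp at h1
    have h3 : (qf (cx (evalR C 0)) x).re - nsq x / γ < 0 := by
      rw [sub_neg, lt_div_iff₀ hγ]; linarith
    have h4 : 0 < Complex.normSq s := by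
      rw [Complex.normSq_pos]; rintro rfl; simp at h
    have := div_neg_of_neg_of_pos (mul_neg_of_neg_of_pos h3 h) h4
    linarith
  · have hsj : s = jw s.im := by apply Complex.ext <;> simp [jw_re, jw_im, ← h]
    by_cases hw : s.im = 0
    · have : s = 0 := by rw [hsj, hw]; simp [jw]
      have h2 := hn.lt x hx0
      rw [this, evalM_zero_real] at hq
      have := congrArg Complex.re hq
      change (↑γ * qf (cx _) x).re = _ at this
      rw [Complex.re_ofReal_mul] at this
      simp at this
      linarith
    · have := sni_axis hC hx0 hw
      rw [← hsj, hq'] at this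
      simp at this

lemma Mg_mul
    (hγ : 0 < γ) (hC : IsSNI C) (hinf : (evalInf C).PosSemidef)
    (h0 : LoewnerLT (evalR C 0) (γ⁻¹ • 1)) : Mg γ C * Ct γ C = C := by
  rw [Ct, ← mul_assoc, Matrix.mul_nonsing_inv, one_mul]
  rw [isUnit_iff_ne_zero]
  intro h
  have h1 : Reg C 0 := hC.1.2 0 (by simp)
  have := evalC_det (reg_Mg (γ := γ) h1)
  rw [h, eval_Mg h1] at this
  exact Mg_det hγ hC hinf h0 (s := 0) (by simp) (by rw [← this]; simp [evalC])

lemma Ct_reg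
    (hγ : 0 < γ) (hC : IsSNI C) (hinf : (evalInf C).PosSemidef)
    (h0 : LoewnerLT (evalR C 0) (γ⁻¹ • 1)) {s : ℂ} (hs : 0 ≤ s.re) : Reg (Ct γ C) s := by
  have h1 : Reg C s := hC.1.2 s hs
  refine reg_of_tendsto (tendsto_solve (gen_punctured s) (Mg_mul hγ hC hinf h0)
    (reg_Mg h1).tendsto h1.tendsto ?_)
  rw [eval_Mg h1]; exact Mg_det hγ hC hinf h0 hs

lemma Ct_eq
    (hγ : 0 < γ) (hC : IsSNI C) (hinf : (evalInf C).PosSemidef)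
    (h0 : LoewnerLT (evalR C 0) (γ⁻¹ • 1)) {s : ℂ} (hs : 0 ≤ s.re) (u : Fin n → ℂ) :
    evalM (Ct γ C) s *ᵥ u = evalM C s *ᵥ (u + (γ:ℂ) • (evalM (Ct γ C) s *ᵥ u)) := by
  have h1 : Reg C s := hC.1.2 s hs
  have := evalM_mul (reg_Mg (γ := γ) h1) (Ct_reg hγ hC hinf h0 hs)
  rw [Mg_mul hγ hC hinf h0, eval_Mg h1] at this
  have := congrArg (· *ᵥ u) this
  simp only [sub_mul, one_mul, Matrix.sub_mulVec, smul_mul_assoc, Matrix.smul_mulVec, ← Matrix.mulVec_mulVec] at this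
  rw [Matrix.mulVec_add, this, Matrix.mulVec_smul]
  abel

lemma Ct_inf
    (hγ : 0 < γ) (hC : IsSNI C) (hinf : (evalInf C).PosSemidef)
    (h0 : LoewnerLT (evalR C 0) (γ⁻¹ • 1)) : ∃ D : Matrix (Fin n) (Fin n) ℂ, Tendsto (evalM (Ct γ C)) (cocompact ℂ) (𝓝 D) ∧
    ∀ u, D *ᵥ u = cx (evalInf C) *ᵥ (u + (γ:ℂ) • (D *ᵥ u)) := by
  have h1 := tendsto_evalInf hC.1.1
  have hn := (nice_inf_zero hγ hC hinf h0).1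
  have h2 : Tendsto (evalM (Mg γ C)) (cocompact ℂ) (𝓝 (1 - cx (γ • 1) * cx (evalInf C))) := by
    refine tendsto_subM gen_cocompact tendsto_oneM (tendsto_mulM gen_cocompact ?_ h1)
    have e : evalM (cM (γ • 1)) = fun _ => cx (n := n) (γ • 1) := funext fun s => evalM_cM _
    rw [e]
    exact tendsto_const_nhds
  have h3 : (1 - cx (γ • 1) * cx (evalInf C)).det ≠ 0 := by
    apply hn.det hγ
    intro y; rw [qf_cx_smul_one]; simp
  refine ⟨_, tendsto_solve gen_cocompact (Mg_mul hγ hC hinf h0) h2 h1 h3, fun u => ?_⟩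
  set D := (1 - cx (γ • 1) * cx (evalInf C))⁻¹ * (evalInf C).map Complex.ofReal with hD
  have : (1 - cx (γ • 1) * cx (evalInf C)) * D = cx (evalInf C) := by
    rw [hD, ← mul_assoc, Matrix.mul_nonsing_inv _ (isUnit_iff_ne_zero.2 h3), one_mul]; rfl
  have := congrArg (· *ᵥ u) this
  simp only [cx_smul, cx_one, one_mul, sub_mul, Matrix.sub_mulVec, smul_mul_assoc, Matrix.smul_mulVec, ← Matrix.mulVec_mulVec] at this
  rw [Matrix.mulVec_add, ← this, Matrix.mulVec_smul]
  abel

lemma Ct_proper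
    (hγ : 0 < γ) (hC : IsSNI C) (hinf : (evalInf C).PosSemidef)
    (h0 : LoewnerLT (evalR C 0) (γ⁻¹ • 1)) : Proper (Ct γ C) := by
  obtain ⟨D, hD, -⟩ := Ct_inf hγ hC hinf h0
  exact proper_of_tendsto hD

end suff

lemma dot_shift {u y : Fin n → ℂ} {γ : ℝ} {A : Matrix (Fin n) (Fin n) ℂ}
    (h : y = A *ᵥ (u + (γ:ℂ) • y)) :
    star u ⬝ᵥ y = qf A (u + (γ:ℂ) • y) - ((γ * nsq y : ℝ) : ℂ) := by
  rw [qf, ← h, star_add, star_smul, add_dotProduct, smul_dotProduct, star_dot_self]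
  simp

section suff
variable {C : Matrix (Fin n) (Fin n) (RatFunc ℝ)} {γ : ℝ}

lemma accretive_axis
    (hγ : 0 < γ) (hC : IsSNI C) (hinf : (evalInf C).PosSemidef)
    (h0 : LoewnerLT (evalR C 0) (γ⁻¹ • 1)) {ω : ℝ} (hω : ω ≠ 0) {u : Fin n → ℂ} (hu : u ≠ 0) :
    0 < (jw ω * qf (evalM (Ct γ C) (jw ω)) u).re := by
  have h1 := Ct_eq hγ hC hinf h0 (s := jw ω) (by simp [jw_re]) u
  have h2 := dot_shift h1
  have hX : u + (γ:ℂ) • (evalM (Ct γ C) (jw ω) *ᵥ u) ≠ 0 := by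
    intro h
    rw [h, Matrix.mulVec_zero] at h1
    rw [h1] at h
    simp at h
    exact hu h
  have h3 := sni_axis hC hX hω
  change qf _ u = _ at h2
  rw [h2]
  simp only [Complex.mul_re, jw_re, jw_im, Complex.sub_im, Complex.ofReal_im]
  linarith

lemma accretive
    (hγ : 0 < γ) (hC : IsSNI C) (hinf : (evalInf C).PosSemidef)
    (h0 : LoewnerLT (evalR C 0) (γ⁻¹ • 1)) {s : ℂ} (hs : 0 ≤ s.re) (hs0 : s ≠ 0) {u : Fin n → ℂ} (hu : u ≠ 0) :
    0 < (s * qf (evalM (Ct γ C) s) u).re := by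
  rcases hs.lt_or_eq with h | h
  swap
  · have hsj : s = jw s.im := by apply Complex.ext <;> simp [jw_re, jw_im, ← h]
    have hw : s.im ≠ 0 := by
      intro hw; apply hs0; rw [hsj, hw]; simp [jw]
    rw [hsj]
    exact accretive_axis hγ hC hinf h0 hw hu
  have hdiff : ∀ s : ℂ, 0 ≤ s.re → DifferentiableAt ℂ (fun s => s * qf (evalM (Ct γ C) s) u) s := by
    intro s hs
    refine differentiableAt_id.mul ?_
    simp only [qf, dotProduct, Matrix.mulVec]
    refine DifferentiableAt.fun_sum fun i _ => (differentiableAt_const _).mul ?_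
    refine DifferentiableAt.fun_sum fun j _ => DifferentiableAt.mul_const ?_ _
    exact differentiableAt_evalC (Ct_reg hγ hC hinf h0 hs i j)
  have hdc : DiffContOnCl ℂ (fun s => s * qf (evalM (Ct γ C) s) u) {z | 0 < z.re} := by
    refine ⟨fun z hz => (hdiff z (le_of_lt hz)).differentiableWithinAt, ?_⟩
    rw [Complex.closure_setOfPred_lt_re]
    exact fun z hz => (hdiff z hz).continuousAt.continuousWithinAt
  refine re_pos_of_boundary (f := fun s => s * qf (evalM (Ct γ C) s) u) hdc ?_ (x := 1) ?_ h
  · intro s hs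
    have hb : ∃ B, ∀ s : ℂ, 0 ≤ s.re → ‖qf (evalM (Ct γ C) s) u‖ ≤ B := by
      have := fun i j => bdd_RHinf (Ct_proper hγ hC hinf h0 i j)
        (fun s hs => Ct_reg hγ hC hinf h0 hs i j)
      choose B hB using this
      refine ⟨∑ i, ‖u i‖ * ∑ j, B i j * ‖u j‖, fun s hs => ?_⟩
      simp only [qf, dotProduct, Matrix.mulVec]
      refine (norm_sum_le _ _).trans (Finset.sum_le_sum fun i _ => ?_)
      rw [norm_mul, Pi.star_apply, norm_star]
      refine mul_le_mul_of_nonneg_left ?_ (norm_nonneg _)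
      refine (norm_sum_le _ _).trans (Finset.sum_le_sum fun j _ => ?_)
      rw [norm_mul]
      exact mul_le_mul_of_nonneg_right (hB i j s hs) (norm_nonneg _)
    obtain ⟨B, hB⟩ := hb
    have hB0 : 0 ≤ B := (norm_nonneg _).trans (hB 0 (by simp))
    refine re_nonneg_of_boundary (f := fun s => s * qf (evalM (Ct γ C) s) u) (B := B) hdc ?_ ?_ ?_ hs.le
    · intro s hs
      rw [norm_mul]
      have := mul_le_mul_of_nonneg_left (hB s hs) (norm_nonneg s)
      nlinarith
    · intro x
      rw [← jw_eq]
      by_cases hx : x = 0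
      · simp [hx, jw]
      · exact (accretive_axis hγ hC hinf h0 hx hu).le
    · intro ε hε
      obtain ⟨D, hD, hD'⟩ := Ct_inf hγ hC hinf h0
      have h1 := (Complex.continuous_re.tendsto _).comp ((tendsto_qf hD u).comp tendsto_ofReal_cocompact)
      have h2 := dot_shift (hD' u)
      have h3 : 0 ≤ (qf D u).re := by
        change qf D u = _ at h2
        rw [h2]
        have := (nice_inf_zero hγ hC hinf h0).1.weak hγ (u + (γ:ℂ) • (D *ᵥ u))
        rw [← hD' u] at this
        simp only [Complex.sub_re, Complex.ofReal_re]
        linarith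
      have h4 := h1.eventually_const_lt (show -ε < (qf D u).re by linarith)
      filter_upwards [h4, eventually_ge_atTop 0] with t ht ht0
      simp only [Function.comp] at ht
      rw [Complex.re_ofReal_mul]
      nlinarith
  · rw [← jw_eq]
    exact accretive_axis hγ hC hinf h0 one_ne_zero hu

end suff



lemma norm_dot_le (x y : Fin n → ℂ) : ‖star x ⬝ᵥ y‖ ≤ n * (‖x‖ * ‖y‖) := by
  rw [dotProduct]
  refine (norm_sum_le _ _).trans ?_
  have : ∀ i ∈ Finset.univ, ‖(star x) i * y i‖ ≤ ‖x‖ * ‖y‖ := by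
    intro i _
    rw [norm_mul, Pi.star_apply, norm_star]
    exact mul_le_mul (norm_le_pi_norm x i) (norm_le_pi_norm y i) (norm_nonneg _) (norm_nonneg _)
  refine (Finset.sum_le_sum this).trans ?_
  simp

lemma coercive {E : ℂ → Matrix (Fin n) (Fin n) ℂ} {s0 : ℂ} (hE : ContinuousAt E s0)
    (hpos : ∀ u, u ≠ 0 → 0 < (qf (E s0) u).re) :
    ∃ δ M : ℝ, 0 < δ ∧ 0 ≤ M ∧ ∀ᶠ s in 𝓝 s0, ∀ u, δ * ‖u‖ ^ 2 ≤ (qf (E s) u).re ∧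
      ‖E s *ᵥ u‖ ≤ M * ‖u‖ := by
  have hK : IsCompact (Metric.sphere (0 : Fin n → ℂ) 1) := isCompact_sphere _ _
  have c1 : Continuous fun p : Matrix (Fin n) (Fin n) ℂ × (Fin n → ℂ) => (qf p.1 p.2).re := by
    unfold qf; fun_prop
  have c2 : Continuous fun p : Matrix (Fin n) (Fin n) ℂ × (Fin n → ℂ) => ‖p.1 *ᵥ p.2‖ := by
    fun_prop
  obtain ⟨δ, hδ, hδu⟩ : ∃ δ > 0, ∀ u ∈ Metric.sphere (0 : Fin n → ℂ) 1, δ < (qf (E s0) u).re := by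
    rcases (Metric.sphere (0 : Fin n → ℂ) 1).eq_empty_or_nonempty with h | h
    · exact ⟨1, one_pos, by simp [h]⟩
    · obtain ⟨u, hu, hmin⟩ := hK.exists_isMinOn h
        (c1.comp (continuous_const.prodMk continuous_id) |>.continuousOn (s := Metric.sphere (0 : Fin n → ℂ) 1)
          (f := fun u => (qf (E s0) u).re))
      have hu0 : u ≠ 0 := by rintro rfl; simp at hu
      refine ⟨(qf (E s0) u).re / 2, by linarith [hpos u hu0], fun v hv => ?_⟩
      have h3 : (qf (E s0) u).re ≤ (qf (E s0) v).re := hmin hv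
      linarith [hpos u hu0]
  obtain ⟨M, hM⟩ : ∃ M, ∀ u ∈ Metric.sphere (0 : Fin n → ℂ) 1, ‖E s0 *ᵥ u‖ < M := by
    obtain ⟨M, hM⟩ := (hK.image_of_continuousOn (c2.comp (continuous_const.prodMk continuous_id) |>.continuousOn
          (f := fun u => ‖E s0 *ᵥ u‖))).bddAbove
    exact ⟨M + 1, fun u hu => lt_of_le_of_lt (hM ⟨u, hu, rfl⟩) (lt_add_one M)⟩
  have key : ∀ᶠ s in 𝓝 s0, ∀ u ∈ Metric.sphere (0 : Fin n → ℂ) 1,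
      δ < (qf (E s) u).re ∧ ‖E s *ᵥ u‖ < M := by
    apply hK.eventually_forall_of_forall_eventually
    intro u hu
    have hp : Tendsto (fun p : ℂ × (Fin n → ℂ) => (E p.1, p.2)) (𝓝 (s0, u)) (𝓝 (E s0, u)) := by
      rw [nhds_prod_eq, nhds_prod_eq]
      exact Tendsto.prodMap hE tendsto_id
    exact (((c1.tendsto _).comp hp).eventually_const_lt (hδu u hu)).and
      (((c2.tendsto _).comp hp).eventually_lt_const (hM u hu))
  refine ⟨δ, |M|, hδ, abs_nonneg _, ?_⟩
  filter_upwards [key] with s hs u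
  by_cases hu : u = 0
  · subst hu; simp [qf]
  have hn : 0 < ‖u‖ := norm_pos_iff.2 hu
  have hnc : (‖u‖ : ℂ) ≠ 0 := by exact_mod_cast hn.ne'
  set v : Fin n → ℂ := ((‖u‖⁻¹ : ℝ) : ℂ) • u with hv
  have huv : u = ((‖u‖ : ℝ) : ℂ) • v := by
    rw [hv, smul_smul]; push_cast; rw [mul_inv_cancel₀ hnc, one_smul]
  have hvs : v ∈ Metric.sphere (0 : Fin n → ℂ) 1 := by
    simp only [mem_sphere_zero_iff_norm, hv, norm_smul]
    simp [hn.ne']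
  obtain ⟨a, b⟩ := hs v hvs
  have e1 : (qf (E s) u).re = ‖u‖ ^ 2 * (qf (E s) v).re := by
    conv_lhs => rw [huv]
    simp only [qf, Matrix.mulVec_smul, star_smul, smul_dotProduct, dotProduct_smul, smul_eq_mul,
      Complex.star_def, Complex.conj_ofReal]
    rw [Complex.re_ofReal_mul, Complex.re_ofReal_mul]; ring
  have e2 : ‖E s *ᵥ u‖ = ‖u‖ * ‖E s *ᵥ v‖ := by
    conv_lhs => rw [huv]
    rw [Matrix.mulVec_smul, norm_smul]; simp
  rw [e1, e2]
  constructor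
  · nlinarith [sq_nonneg ‖u‖]
  · have : ‖E s *ᵥ v‖ ≤ |M| := b.le.trans (le_abs_self _)
    nlinarith

lemma vec_bound {u y e w w2 : Fin n → ℂ} {δ M a b : ℝ} (hδ : 0 < δ) (hM : 0 ≤ M)
    (he : e = y + w2) (hpr : 0 ≤ (star e ⬝ᵥ (w - u)).re) (hco : δ * ‖u‖ ^ 2 ≤ (star u ⬝ᵥ y).re)
    (hy : ‖y‖ ≤ M * ‖u‖) (hw : ‖w‖ ≤ a) (hw2 : ‖w2‖ ≤ b) :
    ‖u‖ ≤ 1 + n * (M * a + b * a + b) / δ := by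
  have ha : 0 ≤ a := (norm_nonneg _).trans hw
  have hb : 0 ≤ b := (norm_nonneg _).trans hw2
  have hn : (0:ℝ) ≤ n := Nat.cast_nonneg n
  have h1 : (star u ⬝ᵥ y).re = (star y ⬝ᵥ u).re := by
    rw [← star_dot]; simp
  have h2 : (star e ⬝ᵥ (w - u)).re = (star e ⬝ᵥ w).re - (star y ⬝ᵥ u).re - (star w2 ⬝ᵥ u).re := by
    rw [dotProduct_sub, he, star_add, add_dotProduct, add_dotProduct]
    simp; ring
  have h3 : (star e ⬝ᵥ w).re ≤ n * ((M * ‖u‖ + b) * a) := by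
    refine (Complex.re_le_norm _).trans ((norm_dot_le _ _).trans ?_)
    refine mul_le_mul_of_nonneg_left (mul_le_mul ?_ hw (norm_nonneg _) (by positivity)) hn
    rw [he]; exact (norm_add_le _ _).trans (add_le_add hy hw2)
  have h4 : -(star w2 ⬝ᵥ u).re ≤ n * (b * ‖u‖) := by
    refine (neg_le_abs _).trans ((Complex.abs_re_le_norm _).trans ((norm_dot_le _ _).trans ?_))
    exact mul_le_mul_of_nonneg_left (mul_le_mul_of_nonneg_right hw2 (norm_nonneg _)) hn
  have h5 : δ * ‖u‖ ^ 2 ≤ n * ((M * ‖u‖ + b) * a) + n * (b * ‖u‖) := by linarith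
  set U := ‖u‖
  by_cases hU : U ≤ 1
  · have : 0 ≤ n * (M * a + b * a + b) / δ := by positivity
    linarith
  · push Not at hU
    have h6 : δ * U ^ 2 ≤ n * (M * a + b * a + b) * U := by
      have : 0 ≤ n * (b * a) * (U - 1) := mul_nonneg (by positivity) (by linarith)
      nlinarith
    have h7 : δ * U ≤ n * (M * a + b * a + b) := by nlinarith
    have : U ≤ n * (M * a + b * a + b) / δ := by rw [le_div_iff₀ hδ]; linarith
    linarith

section suff
variable {C : Matrix (Fin n) (Fin n) (RatFunc ℝ)} {γ : ℝ} {P : Matrix (Fin n) (Fin n) (RatFunc ℝ)}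

lemma loop_bound
    (hγ : 0 < γ) (hC : IsSNI C) (hinf : (evalInf C).PosSemidef)
    (h0 : LoewnerLT (evalR C 0) (γ⁻¹ • 1))
    (hP : IsNI P) (hP0 : Reg P 0) (hle : LoewnerLE (evalR P 0) (γ • 1)) {s0 : ℂ} (hs0 : 0 ≤ s0.re) (hne : s0 ≠ 0) (w1 w2 : Fin n → ℂ) :
    ∃ B : ℝ, ∀ᶠ s in 𝓝 s0, 0 < s.re → ∀ X,
      X = w1 + evalM P s *ᵥ (evalM C s *ᵥ X + w2) → ‖X‖ ≤ B ∧ ‖evalM C s *ᵥ X‖ ≤ B := by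
  have hE : ContinuousAt (fun s => s • evalM (Ct γ C) s) s0 :=
    continuousAt_id.smul (continuousAt_evalM (Ct_reg hγ hC hinf h0 hs0))
  obtain ⟨δ, M, hδ, hM, hev⟩ := coercive hE (by
    intro u hu; rw [qf_smul]; exact accretive hγ hC hinf h0 hs0 hne hu)
  have hn0 : 0 < ‖s0‖ := norm_pos_iff.2 hne
  set a := 2 / ‖s0‖ * ‖w1 + (γ:ℂ) • w2‖ with ha
  set K := 1 + n * (M * a + ‖w2‖ * a + ‖w2‖) / δ with hK
  have hKnn : 0 ≤ K := by rw [hK]; positivity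
  refine ⟨(‖s0‖ + 1) * K + γ * (M * K) + M * K, ?_⟩
  have hc := (continuous_norm (E := ℂ)).tendsto s0
  filter_upwards [hev, hc.eventually_lt_const (show ‖s0‖ < ‖s0‖ + 1 by linarith),
    hc.eventually_const_lt (show ‖s0‖ / 2 < ‖s0‖ by linarith)] with s hs hs1 hs2 hre X hX
  have hsne : s ≠ 0 := by rintro rfl; simp at hre
  set y := evalM C s *ᵥ X with hy
  set u := s⁻¹ • (X - (γ:ℂ) • y) with hu
  have hXu : X = s • u + (γ:ℂ) • y := by
    rw [hu, smul_smul, mul_inv_cancel₀ hsne, one_smul]; abel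
  have hyE : y = (s • evalM (Ct γ C) s) *ᵥ u := by
    have h1 := Ct_eq hγ hC hinf h0 hre.le (s • u)
    rw [Matrix.smul_mulVec, ← Matrix.mulVec_smul]
    set z := evalM (Ct γ C) s *ᵥ (s • u) with hz
    have h2 : (1 - (γ:ℂ) • evalM C s) *ᵥ (y - z) = 0 := by
      have h3 : y = evalM C s *ᵥ (s • u + (γ:ℂ) • y) := by rw [← hXu]
      rw [Matrix.sub_mulVec, Matrix.one_mulVec, Matrix.smul_mulVec, Matrix.mulVec_sub]
      rw [Matrix.mulVec_add, Matrix.mulVec_smul _ (γ:ℂ)] at h1 h3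
      have : y - z = (γ:ℂ) • (evalM C s *ᵥ y) - (γ:ℂ) • (evalM C s *ᵥ z) := by
        conv_lhs => rw [h3, h1]
        abel
      rw [this, smul_sub, sub_self]
    exact sub_eq_zero.1 (ker_of_det (Mg_det hγ hC hinf h0 hre.le) h2)
  set e := y + w2 with he
  set w := s⁻¹ • (w1 + (γ:ℂ) • w2) with hw
  have hpr : 0 ≤ (star e ⬝ᵥ (w - u)).re := by
    have := ni_pr hP hP0 (smul_one_symm γ) hle e hre
    have e1 : (qf (cx (γ • 1)) e - qf (evalM P s) e) / s = star e ⬝ᵥ (w - u) := by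
      have e2 : evalM P s *ᵥ e = X - w1 := by rw [hX]; abel
      have e3 : w - u = s⁻¹ • ((γ:ℂ) • e - (X - w1)) := by
        rw [hw, hu, ← smul_sub, he]; congr 1; rw [smul_add]; abel
      rw [e3, dotProduct_smul, dotProduct_sub, dotProduct_smul, cx_smul, cx_one, qf_smul, qf, qf, e2, Matrix.one_mulVec]
      simp only [smul_eq_mul]
      rw [div_eq_inv_mul]
    rwa [e1] at this
  obtain ⟨h1, h2⟩ := hs u
  have hyn : ‖y‖ ≤ M * ‖u‖ := by rw [hyE]; exact h2
  have hwn : ‖w‖ ≤ a := by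
    rw [hw, norm_smul, ha, norm_inv]
    refine mul_le_mul_of_nonneg_right ?_ (norm_nonneg _)
    rw [inv_eq_one_div, div_le_div_iff₀ (by linarith) hn0]; linarith
  have hU := vec_bound hδ hM he hpr (by rw [hyE]; exact h1) hyn hwn le_rfl
  rw [← hK] at hU
  have hyK : ‖y‖ ≤ M * K := hyn.trans (mul_le_mul_of_nonneg_left hU hM)
  have hXK : ‖X‖ ≤ (‖s0‖ + 1) * K + γ * (M * K) := by
    conv_lhs => rw [hXu]
    refine (norm_add_le _ _).trans (add_le_add ?_ ?_)
    · rw [norm_smul]; exact mul_le_mul hs1.le hU (norm_nonneg _) (by positivity)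
    · rw [norm_smul, Complex.norm_real, Real.norm_of_nonneg hγ.le]
      exact mul_le_mul_of_nonneg_left hyK hγ.le
  have : 0 ≤ M * K := by positivity
  have : 0 ≤ (‖s0‖ + 1) * K + γ * (M * K) := by positivity
  constructor <;> linarith

lemma det_zero_ne
    (hγ : 0 < γ) (hC : IsSNI C) (hinf : (evalInf C).PosSemidef)
    (h0 : LoewnerLT (evalR C 0) (γ⁻¹ • 1))
    (hP : IsNI P) (hP0 : Reg P 0) (hle : LoewnerLE (evalR P 0) (γ • 1)) : (1 - evalM P 0 * evalM C 0).det ≠ 0 := by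
  rw [evalM_zero_real C]
  apply (nice_inf_zero hγ hC hinf h0).2.det hγ
  intro y
  obtain ⟨r, hr, e⟩ := psd_qf (cx_psd hle) y
  rw [evalM_zero_real P]
  rw [cx_sub, qf_sub, qf_cx_smul_one] at e
  have := congrArg Complex.re e
  simp only [Complex.sub_re, Complex.ofReal_re] at this
  change (qf (cx _) y).re ≤ _
  linarith

lemma loop_det_ne
    (hγ : 0 < γ) (hC : IsSNI C) (hinf : (evalInf C).PosSemidef)
    (h0 : LoewnerLT (evalR C 0) (γ⁻¹ • 1))
    (hP : IsNI P) (hP0 : Reg P 0) (hle : LoewnerLE (evalR P 0) (γ • 1)) : (1 - P * C).det ≠ 0 := by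
  intro h
  have h1 : Reg C 0 := hC.1.2 0 (by simp)
  have := evalC_det (Reg.one.sub (hP0.mul h1))
  rw [h, evalM_sub Reg.one (hP0.mul h1), evalM_mul hP0 h1, evalM_one] at this
  exact det_zero_ne hγ hC hinf h0 hP hP0 hle (by rw [← this]; simp [evalC])

lemma blocks_reg
    (hγ : 0 < γ) (hC : IsSNI C) (hinf : (evalInf C).PosSemidef)
    (h0 : LoewnerLT (evalR C 0) (γ⁻¹ • 1))
    (hP : IsNI P) (hP0 : Reg P 0) (hle : LoewnerLE (evalR P 0) (γ • 1)) {s : ℂ} (hs : 0 ≤ s.re) :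
    Reg (1 - P * C)⁻¹ s ∧ Reg ((1 - P * C)⁻¹ * P) s ∧ Reg (C * (1 - P * C)⁻¹) s ∧
      Reg (C * (1 - P * C)⁻¹ * P) s := by
  have hdet := loop_det_ne hγ hC hinf h0 hP hP0 hle
  set T := (1 - P * C)⁻¹ with hT
  have hMT : (1 - P * C) * T = 1 := Matrix.mul_nonsing_inv _ (isUnit_iff_ne_zero.2 hdet)
  by_cases hs0 : s = 0
  · subst hs0
    have h1 : Reg C 0 := hC.1.2 0 (by simp)
    have hT : Reg T 0 := by
      refine reg_of_tendsto (tendsto_solve (gen_punctured 0) hMT (Reg.one.sub (hP0.mul h1)).tendsto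
        tendsto_oneM ?_)
      rw [evalM_sub Reg.one (hP0.mul h1), evalM_mul hP0 h1, evalM_one]
      exact det_zero_ne hγ hC hinf h0 hP hP0 hle
    exact ⟨hT, hT.mul hP0, h1.mul hT, (h1.mul hT).mul hP0⟩
  · have hφ : Tendsto (fun t : ℝ => s + (t:ℂ)) (𝓝[>] 0) (𝓝[≠] s) := by
      refine tendsto_nhdsWithin_iff.2 ⟨?_, ?_⟩
      · have : Continuous (fun t : ℝ => s + (t:ℂ)) := by fun_prop
        have := this.tendsto 0
        simp only [Complex.ofReal_zero, add_zero] at this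
        exact this.mono_left nhdsWithin_le_nhds
      · filter_upwards [self_mem_nhdsWithin] with t ht
        have : t ≠ 0 := ne_of_gt ht
        simpa using this
    have hφre : ∀ᶠ t : ℝ in 𝓝[>] 0, 0 < (s + (t:ℂ)).re := by
      filter_upwards [self_mem_nhdsWithin] with t ht
      have : 0 < t := ht
      simp; linarith
    have key : ∀ (p : ℂ → Prop), (∀ᶠ z in 𝓝[≠] s, 0 < z.re → p z) → ∃ᶠ z in 𝓝[≠] s, p z := by
      intro p hp
      have : ∀ᶠ t : ℝ in 𝓝[>] 0, p (s + (t:ℂ)) := by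
        filter_upwards [hφ.eventually hp, hφre] with t h1 h2 using h1 h2
      exact hφ.frequently this.frequently
    have hg := gen_punctured s
    have ent : ∀ (A : Matrix (Fin n) (Fin n) ℂ) (i j : Fin n), A i j = (A *ᵥ Pi.single j 1) i := by
      intro A i j; simp
    have hentb : ∀ (A : Matrix (Fin n) (Fin n) ℂ) (i j : Fin n) (B : ℝ), ‖A *ᵥ Pi.single j 1‖ ≤ B → ‖A i j‖ ≤ B := by
      intro A i j B h; rw [ent A i j]; exact (norm_le_pi_norm _ i).trans h
    have hall : ∀ᶠ z in 𝓝[≠] s, (1 - evalM P z * evalM C z) * evalM T z = 1 ∧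
        evalM (T * P) z = evalM T z * evalM P z ∧ evalM (C * T) z = evalM C z * evalM T z ∧
        evalM (C * T * P) z = evalM C z * evalM T z * evalM P z := by
      filter_upwards [hg.reg P, hg.reg C, hg.reg T] with z hp hc ht
      refine ⟨?_, evalM_mul ht hp, evalM_mul hc ht, ?_⟩
      · have := evalM_mul (Reg.one.sub (hp.mul hc)) ht
        rw [hMT, evalM_one, evalM_sub Reg.one (hp.mul hc), evalM_mul hp hc, evalM_one] at this
        exact this.symm
      · rw [evalM_mul (hc.mul ht) hp, evalM_mul hc ht]
    have sol : ∀ (z : ℂ) (v : Fin n → ℂ), (1 - evalM P z * evalM C z) * evalM T z = 1 →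
        evalM T z *ᵥ v = v + evalM P z *ᵥ (evalM C z *ᵥ (evalM T z *ᵥ v)) := by
      intro z v h
      have := congrArg (· *ᵥ v) h
      simp only [sub_mul, one_mul, Matrix.sub_mulVec, Matrix.one_mulVec, ← Matrix.mulVec_mulVec] at this
      rw [sub_eq_iff_eq_add] at this
      exact this
    have lb := fun w1 w2 => loop_bound hγ hC hinf h0 hP hP0 hle hs hs0 w1 w2
    refine ⟨fun i j => ?_, fun i j => ?_, fun i j => ?_, fun i j => ?_⟩
    · obtain ⟨B, hB⟩ := lb (Pi.single j 1) 0
      refine not_pole_of_bdd (B := B) (key _ ?_)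
      filter_upwards [nhdsWithin_le_nhds hB, hall] with z h1 h2 h3
      refine hentb (evalM T z) i j B (h1 h3 (evalM T z *ᵥ Pi.single j 1) ?_).1
      rw [add_zero]; exact sol z _ h2.1
    · obtain ⟨B, hB⟩ := lb 0 (Pi.single j 1)
      refine not_pole_of_bdd (B := B) (key _ ?_)
      filter_upwards [nhdsWithin_le_nhds hB, hall] with z h1 h2 h3
      refine hentb (evalM (T * P) z) i j B ?_
      rw [h2.2.1, ← Matrix.mulVec_mulVec]
      refine (h1 h3 _ ?_).1
      rw [zero_add, Matrix.mulVec_add, add_comm]; exact sol z _ h2.1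
    · obtain ⟨B, hB⟩ := lb (Pi.single j 1) 0
      refine not_pole_of_bdd (B := B) (key _ ?_)
      filter_upwards [nhdsWithin_le_nhds hB, hall] with z h1 h2 h3
      refine hentb (evalM (C * T) z) i j B ?_
      rw [h2.2.2.1, ← Matrix.mulVec_mulVec]
      refine (h1 h3 _ ?_).2
      rw [add_zero]; exact sol z _ h2.1
    · obtain ⟨B, hB⟩ := lb 0 (Pi.single j 1)
      refine not_pole_of_bdd (B := B) (key _ ?_)
      filter_upwards [nhdsWithin_le_nhds hB, hall] with z h1 h2 h3
      refine hentb (evalM (C * T * P) z) i j B ?_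
      rw [h2.2.2.2, ← Matrix.mulVec_mulVec, ← Matrix.mulVec_mulVec]
      refine (h1 h3 _ ?_).2
      rw [zero_add, Matrix.mulVec_add, add_comm]; exact sol z _ h2.1

lemma suff
    (hγ : 0 < γ) (hC : IsSNI C) (hinf : (evalInf C).PosSemidef)
    (h0 : LoewnerLT (evalR C 0) (γ⁻¹ • 1))
    (hP : IsNI P) (hP0 : Reg P 0) (hle : LoewnerLE (evalR P 0) (γ • 1)) : FeedbackStable P C := by
  have hdet := loop_det_ne hγ hC hinf h0 hP hP0 hle
  refine ⟨hdet, ?_⟩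
  have hreg := fun s hs => blocks_reg hγ hC hinf h0 hP hP0 hle (s := s) hs
  set T := (1 - P * C)⁻¹ with hT
  have hMT : (1 - P * C) * T = 1 := Matrix.mul_nonsing_inv _ (isUnit_iff_ne_zero.2 hdet)
  have tP := tendsto_evalInf hP.1
  have tC := tendsto_evalInf hC.1.1
  have g := gen_cocompact
  have tT := tendsto_solve g hMT (tendsto_subM g tendsto_oneM (tendsto_mulM g tP tC)) tendsto_oneM (by
    apply (nice_inf_zero hγ hC hinf h0).1.det hγ
    intro y
    have := ni_inf hP hP0 (smul_one_symm γ) hle y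
    rw [qf_cx_smul_one] at this
    exact this)
  have p1 := proper_of_tendsto tT
  have p2 := proper_of_tendsto (tendsto_mulM g tT tP)
  have p3 := proper_of_tendsto (tendsto_mulM g tC tT)
  have p4 := proper_of_tendsto (tendsto_mulM g (tendsto_mulM g tC tT) tP)
  constructor
  · rintro (i | i) (j | j)
    · exact p1 i j
    · exact p2 i j
    · exact p3 i j
    · exact p4 i j
  · rintro s hs (i | i) (j | j)
    · exact (hreg s hs).1 i j
    · exact (hreg s hs).2.1 i j
    · exact (hreg s hs).2.2.1 i j
    · exact (hreg s hs).2.2.2 i j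

end suff



lemma stable_reg {P C : Matrix (Fin n) (Fin n) (RatFunc ℝ)} (h : FeedbackStable P C) {s : ℂ}
    (hs : 0 ≤ s.re) (hP : Reg P s) (hC : Reg C s) : (1 - evalM P s * evalM C s).det ≠ 0 := by
  have hT : Reg (1 - P * C)⁻¹ s := fun i j => h.2.2 s hs (Sum.inl i) (Sum.inl j)
  have e := evalM_mul (Reg.one.sub (hP.mul hC)) hT
  rw [Matrix.mul_nonsing_inv _ (isUnit_iff_ne_zero.2 h.1), evalM_one,
    evalM_sub Reg.one (hP.mul hC), evalM_mul hP hC, evalM_one] at e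
  intro h0
  have := congrArg Matrix.det e
  rw [Matrix.det_mul, h0] at this
  simp at this

lemma stable_inf {P C : Matrix (Fin n) (Fin n) (RatFunc ℝ)} (h : FeedbackStable P C)
    {P0 C0 : Matrix (Fin n) (Fin n) ℂ} (hP : Tendsto (evalM P) (cocompact ℂ) (𝓝 P0))
    (hC : Tendsto (evalM C) (cocompact ℂ) (𝓝 C0)) : (1 - P0 * C0).det ≠ 0 := by
  have hT : Proper (1 - P * C)⁻¹ := fun i j => h.2.1 (Sum.inl i) (Sum.inl j)
  have g := gen_cocompact
  have t := tendsto_mulM g (tendsto_subM g tendsto_oneM (tendsto_mulM g hP hC)) (tendsto_evalInf hT)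
  rw [Matrix.mul_nonsing_inv _ (isUnit_iff_ne_zero.2 h.1)] at t
  have e := tendsto_nhds_unique t tendsto_oneM
  intro h0
  have := congrArg Matrix.det e
  rw [Matrix.det_mul, h0] at this
  simp at this

/-- quotient of polynomials as a rational function -/
def rf (p q : ℝ[X]) : RatFunc ℝ := algebraMap ℝ[X] (RatFunc ℝ) p / algebraMap ℝ[X] (RatFunc ℝ) q

/-- complex value of a real polynomial -/
abbrev pv (p : ℝ[X]) (s : ℂ) : ℂ := p.eval₂ (algebraMap ℝ ℂ) s

lemma rf_pole {p q : ℝ[X]} {s : ℂ} (h : pv q s ≠ 0) : ¬ IsPoleAt (rf p q) s :=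
  not_pole_of_dvd (RatFunc.denom_div_dvd p q) h

lemma rf_eval {p q : ℝ[X]} {s : ℂ} (h : pv q s ≠ 0) : evalC (rf p q) s = pv p s / pv q s := by
  have hq : q ≠ 0 := by rintro rfl; simp [pv] at h
  have hq' : algebraMap ℝ[X] (RatFunc ℝ) q ≠ 0 := RatFunc.algebraMap_ne_zero hq
  have hp : ∀ r : ℝ[X], ¬ IsPoleAt (algebraMap ℝ[X] (RatFunc ℝ) r) s := by
    intro r; simp [IsPoleAt]
  have he : ∀ r : ℝ[X], evalC (algebraMap ℝ[X] (RatFunc ℝ) r) s = pv r s := by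
    intro r; simp [evalC]
  have := evalC_mul (rf_pole (p := p) h) (hp q)
  rw [he, rf, div_mul_cancel₀ _ hq', he] at this
  rw [eq_div_iff h, this, rf]

lemma rf_inf {p q : ℝ[X]} {k : ℕ} (hp : p.natDegree ≤ k) (hq : q.natDegree ≤ k)
    (hc : q.coeff k ≠ 0) :
    Tendsto (evalC (rf p q)) (cocompact ℂ) (𝓝 ((p.coeff k : ℂ) / (q.coeff k : ℂ))) := by
  have := tendsto_quot (p.map (algebraMap ℝ ℂ)) (q.map (algebraMap ℝ ℂ)) (k := k)
    (Polynomial.natDegree_map_le.trans hp) (Polynomial.natDegree_map_le.trans hq)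
    (by rw [Polynomial.coeff_map]; simpa using hc)
  rw [Polynomial.coeff_map, Polynomial.coeff_map] at this
  refine this.congr' ?_
  have hq0 : q ≠ 0 := by rintro rfl; simp at hc
  filter_upwards [gen_cocompact q hq0] with s hs
  rw [rf_eval hs, ← eval₂_eq_eval_map, ← eval₂_eq_eval_map]

/-- Variant of NI, closed under sums. -/
structure NI' (P : Matrix (Fin n) (Fin n) (RatFunc ℝ)) : Prop where
  lim : ∃ D, Tendsto (evalM P) (cocompact ℂ) (𝓝 D)
  reg : ∀ s : ℂ, 0 < s.re → Reg P s
  reg0 : Reg P 0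
  im : ∀ ω : ℝ, 0 < ω → ∀ᶠ w in 𝓝[≠] ω, ∀ y, (qf (evalM P (jw w)) y).im ≤ 0
  res : ∀ ω : ℝ, 0 < ω → ∃ R : Matrix (Fin n) (Fin n) ℂ, R.PosSemidef ∧
      Tendsto (fun s : ℂ => (s - jw ω) • Complex.I • evalM P s) (𝓝[≠] jw ω) (𝓝 R)

lemma continuous_jw : Continuous jw := by unfold jw; fun_prop

lemma tendsto_jw (ω : ℝ) : Tendsto jw (𝓝[≠] ω) (𝓝[≠] jw ω) := by
  refine tendsto_nhdsWithin_iff.2 ⟨(continuous_jw.tendsto ω).mono_left nhdsWithin_le_nhds, ?_⟩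
  filter_upwards [self_mem_nhdsWithin] with w hw h
  exact hw (jw_inj h)

lemma NI'.isNI {P : Matrix (Fin n) (Fin n) (RatFunc ℝ)} (h : NI' P) : IsNI P := by
  obtain ⟨D, hD⟩ := h.lim
  refine ⟨proper_of_tendsto hD, fun s hs => reg_iff.1 (h.reg s hs), fun ω hω hp => ?_,
    fun ω hω _ => h.res ω hω, fun hp => absurd hp (reg_iff.1 h.reg0)⟩
  rw [niKer_psd]
  intro y
  have h1 := tendsto_qf ((reg_iff.2 hp).tendsto.comp (tendsto_jw ω)) y
  refine le_of_tendsto ((Complex.continuous_im.tendsto _).comp h1) ?_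
  filter_upwards [h.im ω hω] with w hw using hw y

lemma tendsto_addM {l : Filter ℂ} (hl : Gen l) {A B : Matrix (Fin n) (Fin n) (RatFunc ℝ)}
    {A0 B0 : Matrix (Fin n) (Fin n) ℂ} (hA : Tendsto (evalM A) l (𝓝 A0))
    (hB : Tendsto (evalM B) l (𝓝 B0)) : Tendsto (evalM (A + B)) l (𝓝 (A0 + B0)) := by
  refine (hA.add hB).congr' ?_
  filter_upwards [hl.reg A, hl.reg B] with s hA hB
  rw [evalM_add hA hB]

lemma tendsto_smulM {l : Filter ℂ} (hl : Gen l) {f : RatFunc ℝ} {c : ℂ}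
    (hf : Tendsto (evalC f) l (𝓝 c)) (A : Matrix (Fin n) (Fin n) ℝ) :
    Tendsto (evalM (f • cM A)) l (𝓝 (c • cx A)) := by
  refine (hf.smul_const (cx A)).congr' ?_
  filter_upwards [hl.not_pole f] with s hs
  rw [evalM_smul hs (Reg.cM _), evalM_cM]; rfl

lemma NI'.add {P Q : Matrix (Fin n) (Fin n) (RatFunc ℝ)} (hP : NI' P) (hQ : NI' Q) :
    NI' (P + Q) := by
  refine ⟨?_, fun s hs => (hP.reg s hs).add (hQ.reg s hs), hP.reg0.add hQ.reg0, fun ω hω => ?_,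
    fun ω hω => ?_⟩
  · obtain ⟨D, hD⟩ := hP.lim
    obtain ⟨E, hE⟩ := hQ.lim
    exact ⟨_, tendsto_addM gen_cocompact hD hE⟩
  · have g := gen_punctured (jw ω)
    filter_upwards [hP.im ω hω, hQ.im ω hω, (tendsto_jw ω).eventually (g.reg P),
      (tendsto_jw ω).eventually (g.reg Q)] with w h1 h2 h3 h4 y
    rw [evalM_add h3 h4, qf_add, Complex.add_im]
    linarith [h1 y, h2 y]
  · obtain ⟨R, hR, hRt⟩ := hP.res ω hω
    obtain ⟨S, hS, hSt⟩ := hQ.res ω hω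
    refine ⟨R + S, hR.add hS, (hRt.add hSt).congr' ?_⟩
    have g := gen_punctured (jw ω)
    filter_upwards [g.reg P, g.reg Q] with s h1 h2
    rw [evalM_add h1 h2, smul_add, smul_add]

lemma eval_atom {f : RatFunc ℝ} {s : ℂ} (hf : ¬ IsPoleAt f s) (A : Matrix (Fin n) (Fin n) ℝ) :
    evalM (f • cM A) s = evalC f s • cx A := by
  rw [evalM_smul hf (Reg.cM _), evalM_cM]; rfl

lemma atomS {f : RatFunc ℝ} {c : ℂ} (hlim : Tendsto (evalC f) (cocompact ℂ) (𝓝 c))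
    (hreg : ∀ s : ℂ, 0 ≤ s.re → ¬ IsPoleAt f s) (him : ∀ ω : ℝ, 0 < ω → (evalC f (jw ω)).im ≤ 0)
    {A : Matrix (Fin n) (Fin n) ℝ} (hA : A.PosSemidef) : NI' (f • cM A) := by
  have hr : ∀ s : ℂ, 0 ≤ s.re → Reg (f • cM A) s := fun s hs => Reg.smul (hreg s hs) (Reg.cM A)
  refine ⟨⟨_, tendsto_smulM gen_cocompact hlim A⟩, fun s hs => hr s hs.le, hr 0 (by simp), ?_, ?_⟩
  · intro ω hω
    filter_upwards [nhdsWithin_le_nhds (Ioi_mem_nhds hω)] with w hw y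
    rw [eval_atom (hreg _ (by simp [jw_re])), qf_smul]
    obtain ⟨r, hr, e⟩ := psd_qf (cx_psd hA) y
    rw [e, mul_comm, Complex.im_ofReal_mul]
    exact mul_nonpos_of_nonneg_of_nonpos hr (him w hw)
  · intro ω hω
    refine ⟨0, Matrix.PosSemidef.zero, ?_⟩
    have h1 := (hr (jw ω) (by simp [jw_re])).tendsto
    have h2 : Tendsto (fun s => s - jw ω) (𝓝[≠] jw ω) (𝓝 (jw ω - jw ω)) :=
      ((continuous_id.sub continuous_const).tendsto _).mono_left nhdsWithin_le_nhds
    have := h2.smul (h1.const_smul Complex.I)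
    rwa [sub_self, zero_smul] at this

/-- `X^2 + bX + a` -/
def qd (b a : ℝ) : ℝ[X] := X ^ 2 + Polynomial.C b * X + Polynomial.C a

lemma pv_qd (b a : ℝ) (s : ℂ) : pv (qd b a) s = s ^ 2 + b * s + a := by
  simp [pv, qd]

lemma qd_deg (b a : ℝ) : (qd b a).natDegree ≤ 2 := by
  unfold qd; compute_degree

lemma qd_coeff (b a : ℝ) : (qd b a).coeff 2 = 1 := by
  unfold qd; compute_degree!

lemma pv_one (s : ℂ) : pv 1 s = 1 := by simp [pv]
lemma pv_X (s : ℂ) : pv X s = s := by simp [pv]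

lemma qd_inf1 (b a : ℝ) : Tendsto (evalC (rf 1 (qd b a))) (cocompact ℂ) (𝓝 0) := by
  have := rf_inf (p := 1) (k := 2) (by simp) (qd_deg b a) (by rw [qd_coeff]; simp)
  simpa [Polynomial.coeff_one] using this

lemma qd_infX (b a : ℝ) : Tendsto (evalC (rf X (qd b a))) (cocompact ℂ) (𝓝 0) := by
  have := rf_inf (p := X) (k := 2) (by simp) (qd_deg b a) (by rw [qd_coeff]; simp)
  simpa [Polynomial.coeff_X] using this

lemma qd_ne {b a : ℝ} (hb : 0 ≤ b) (ha : 0 < a) {s : ℂ} (hs : 0 < s.re) :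
    pv (qd b a) s ≠ 0 := by
  rw [pv_qd]
  intro h
  have h1 := congrArg Complex.re h
  have h2 := congrArg Complex.im h
  simp [pow_two] at h1 h2
  have h3 : s.im * (2 * s.re + b) = 0 := by linarith
  rcases mul_eq_zero.1 h3 with h4 | h4
  · rw [h4] at h1; nlinarith
  · linarith

lemma atomL {ω1 : ℝ} (hω1 : 0 < ω1) {A B : Matrix (Fin n) (Fin n) ℝ} (hA : A.IsSymm)
    (hB : Bᵀ = -B) (hpsd : (cx A + jw ω1 • cx B).PosSemidef) :
    NI' (rf 1 (qd 0 (ω1 ^ 2)) • cM A + rf X (qd 0 (ω1 ^ 2)) • cM B) := by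
  have hfac : ∀ s, pv (qd 0 (ω1 ^ 2)) s = (s - jw ω1) * (s + jw ω1) := by
    intro s; rw [pv_qd, jw]; push_cast
    linear_combination (ω1:ℂ) ^ 2 * Complex.I_sq
  have hreg : ∀ s, pv (qd 0 (ω1 ^ 2)) s ≠ 0 → Reg (rf 1 (qd 0 (ω1 ^ 2)) • cM A + rf X (qd 0 (ω1 ^ 2)) • cM B) s :=
    fun s hs => (Reg.smul (rf_pole hs) (Reg.cM A)).add (Reg.smul (rf_pole hs) (Reg.cM B))
  have hev : ∀ s, pv (qd 0 (ω1 ^ 2)) s ≠ 0 →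
      evalM (rf 1 (qd 0 (ω1 ^ 2)) • cM A + rf X (qd 0 (ω1 ^ 2)) • cM B) s =
        (pv (qd 0 (ω1 ^ 2)) s)⁻¹ • (cx A + s • cx B) := by
    intro s hs
    rw [evalM_add (Reg.smul (rf_pole hs) (Reg.cM A)) (Reg.smul (rf_pole hs) (Reg.cM B)),
      eval_atom (rf_pole hs), eval_atom (rf_pole hs), rf_eval hs, rf_eval hs, pv_one, pv_X, smul_add,
      smul_smul, one_div, div_eq_inv_mul]
  have hjw : ∀ w : ℝ, pv (qd 0 (ω1 ^ 2)) (jw w) = ((ω1 ^ 2 - w ^ 2 : ℝ) : ℂ) := by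
    intro w; rw [pv_qd, jw]; push_cast
    linear_combination (w:ℂ) ^ 2 * Complex.I_sq
  refine ⟨⟨_, tendsto_addM gen_cocompact (tendsto_smulM gen_cocompact (qd_inf1 _ _) A)
    (tendsto_smulM gen_cocompact (qd_infX _ _) B)⟩, fun s hs => hreg s (qd_ne le_rfl (by positivity) hs),
    hreg 0 ?_, ?_, ?_⟩
  · rw [pv_qd]; simp [hω1.ne']
  · intro ω hω
    have hg : ∀ᶠ w in 𝓝[≠] ω, pv (qd 0 (ω1 ^ 2)) (jw w) ≠ 0 :=
      (tendsto_jw ω).eventually (gen_punctured _ _ (by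
        intro h; have := qd_coeff 0 (ω1^2); rw [h] at this; simp at this))
    filter_upwards [hg] with w hw y
    rw [hev _ hw, hjw, qf_smul, qf_add, qf_smul, ← Complex.ofReal_inv, Complex.im_ofReal_mul]
    have e : (jw w * qf (cx B) y).im = 0 := by
      have := qf_conjTranspose (cx B) y
      rw [cx_conjTranspose, hB] at this
      have e2 : cx (-B) = (-1:ℂ) • cx B := by ext; simp [cx]
      rw [e2, qf_smul] at this
      have := congrArg Complex.re this
      simp at this
      simp [Complex.mul_im, jw_re, jw_im]
      right; linarith
    rw [Complex.add_im, e, qf_cx_im hA]; simp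
  · intro ω hω
    by_cases h : ω = ω1
    · subst h
      have hne : (ω:ℂ) ≠ 0 := by exact_mod_cast hω.ne'
      refine ⟨((1 / (2 * ω) : ℝ) : ℂ) • (cx A + jw ω • cx B), hpsd.smul ?_, ?_⟩
      · rw [Complex.zero_le_real]; positivity
      have hj : jw ω + jw ω ≠ 0 := by
        rw [← two_mul]; simp [jw, hne]
      have t1 : Tendsto (fun s : ℂ => (Complex.I * (s + jw ω)⁻¹) • (cx A + s • cx B)) (𝓝[≠] jw ω)
          (𝓝 ((Complex.I * (jw ω + jw ω)⁻¹) • (cx A + jw ω • cx B))) := by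
        apply Tendsto.mono_left _ nhdsWithin_le_nhds
        have : ContinuousAt (fun s : ℂ => (Complex.I * (s + jw ω)⁻¹) • (cx A + s • cx B)) (jw ω) := by
          fun_prop (disch := exact hj)
        exact this
      have e : Complex.I * (jw ω + jw ω)⁻¹ = ((1 / (2 * ω) : ℝ) : ℂ) := by
        rw [← two_mul, jw]; push_cast
        have := Complex.I_ne_zero
        field_simp
      rw [e] at t1
      refine t1.congr' ?_
      have hadd : ∀ᶠ s in 𝓝[≠] jw ω, s + jw ω ≠ 0 := by
        apply nhdsWithin_le_nhds
        exact ((continuous_id.add continuous_const).continuousAt (x := jw ω)).eventually_ne hj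
      filter_upwards [self_mem_nhdsWithin, hadd] with s hs hs2
      have hs1 : s - jw ω ≠ 0 := sub_ne_zero.2 hs
      rw [hev s (by rw [hfac]; exact mul_ne_zero hs1 hs2), hfac, smul_smul, smul_smul]
      congr 1
      field_simp
    · refine ⟨0, Matrix.PosSemidef.zero, ?_⟩
      have h1 := (hreg (jw ω) (by
        rw [hjw]; norm_cast
        intro h'
        apply h
        have : (ω1 - ω) * (ω1 + ω) = 0 := by linarith
        rcases mul_eq_zero.1 this with h | h <;> linarith)).tendsto
      have h2 : Tendsto (fun s => s - jw ω) (𝓝[≠] jw ω) (𝓝 (jw ω - jw ω)) :=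
        ((continuous_id.sub continuous_const).tendsto _).mono_left nhdsWithin_le_nhds
      have := h2.smul (h1.const_smul Complex.I)
      rwa [sub_self, zero_smul] at this

lemma one_psd : (1 : Matrix (Fin n) (Fin n) ℝ).PosSemidef := Matrix.PosSemidef.one

lemma cM_zero : cM (0 : Matrix (Fin n) (Fin n) ℝ) = 0 := by ext i j; simp [cM]

lemma cx_zero : cx (0 : Matrix (Fin n) (Fin n) ℝ) = 0 := by ext i j; simp [cx]

lemma atomF {b a ε : ℝ} (hb : 0 ≤ b) (ha : 0 < a) (hε : 0 ≤ ε) :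
    NI' (rf 1 (qd b a) • cM (ε • (1 : Matrix (Fin n) (Fin n) ℝ))) := by
  have hp : (ε • (1 : Matrix (Fin n) (Fin n) ℝ)).PosSemidef := one_psd.smul hε
  rcases hb.lt_or_eq with h | h
  · have hjw : ∀ w : ℝ, pv (qd b a) (jw w) = ((a - w ^ 2 : ℝ) : ℂ) + ((b * w : ℝ) : ℂ) * Complex.I := by
      intro w; rw [pv_qd, jw]; push_cast
      linear_combination (w:ℂ) ^ 2 * Complex.I_sq
    have hne : ∀ s : ℂ, 0 ≤ s.re → pv (qd b a) s ≠ 0 := by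
      intro s hs
      rcases hs.lt_or_eq with h1 | h1
      · exact qd_ne hb ha h1
      · have hsj : s = jw s.im := by apply Complex.ext <;> simp [jw_re, jw_im, ← h1]
        rw [hsj, hjw]
        intro h2
        have h3 := congrArg Complex.re h2
        have h4 := congrArg Complex.im h2
        simp only [Complex.add_re, Complex.add_im, Complex.ofReal_re, Complex.ofReal_im,
          Complex.mul_re, Complex.mul_im, Complex.I_re, Complex.I_im, Complex.zero_re,
          Complex.zero_im, mul_zero, mul_one, sub_zero, add_zero, zero_add] at h3 h4
        rcases mul_eq_zero.1 h4 with h4 | h4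
        · linarith
        · rw [h4] at h3; simp at h3; linarith
    refine atomS (qd_inf1 b a) (fun s hs => rf_pole (hne s hs)) ?_ hp
    intro ω hω
    rw [rf_eval (hne _ (by simp [jw_re])), pv_one, hjw, one_div, Complex.inv_im]
    refine div_nonpos_of_nonpos_of_nonneg ?_ (Complex.normSq_nonneg _)
    simp only [Complex.add_im, Complex.ofReal_re, Complex.ofReal_im,
          Complex.mul_im, Complex.I_re, Complex.I_im, mul_zero, mul_one, add_zero, zero_add]
    exact neg_nonpos.2 (by positivity)
  · subst h
    have hs : 0 < √a := Real.sqrt_pos.2 ha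
    have := atomL (n := n) hs (A := ε • 1) (B := 0) (smul_one_symm ε) (by simp) (by
      rw [cx_zero, smul_zero, add_zero]; exact cx_psd hp)
    rw [Real.sq_sqrt ha.le, cM_zero, smul_zero, add_zero] at this
    exact this

/-- Real matrices with nonpositive imaginary form are symmetric. -/
lemma symm_of_im {A : Matrix (Fin n) (Fin n) ℝ} (h : ∀ y, (qf (cx A) y).im ≤ 0) : A.IsSymm := by
  have h0 : ∀ y, (qf (cx A) y).im = 0 := by
    intro y
    refine le_antisymm (h y) ?_
    have := h (star y)
    have e : qf (cx A) (star y) = star (qf (cx A) y) := by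
      have := qf_map_star (cx A) (star y)
      rw [star_star] at this
      rw [← this]; congr 1; ext; simp [cx]
    rw [e] at this
    simp at this
    exact this
  ext i j
  have := h0 (Pi.single i 1 + Complex.I • Pi.single j 1)
  have hs : ∀ i : Fin n, star (Pi.single i (1:ℂ)) = (Pi.single i (1:ℂ) : Fin n → ℂ) := by
    intro i; ext k; simp [Pi.single_apply]
  simp only [qf, Matrix.mulVec_add, Matrix.mulVec_smul, star_add, star_smul, add_dotProduct,
    dotProduct_add, smul_dotProduct, dotProduct_smul, hs] at this
  simp [cx] at this
  simp
  linarith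



lemma real_psd {A : Matrix (Fin n) (Fin n) ℝ} (hs : A.IsSymm) (h : ∀ y, 0 ≤ (qf (cx A) y).re) :
    A.PosSemidef := by
  refine Matrix.PosSemidef.of_dotProduct_mulVec_nonneg ?_ fun x => ?_
  · simpa [Matrix.IsHermitian, Matrix.IsSymm] using hs
  · have := h (fun i => (x i : ℂ))
    rw [qf_cx, Complex.ofReal_re] at this
    simpa using this

/-- Hypothesis (ii) in convenient form. -/
def Hyp (C : Matrix (Fin n) (Fin n) (RatFunc ℝ)) (γ : ℝ) : Prop :=
  ∀ (P : Matrix (Fin n) (Fin n) (RatFunc ℝ)) (M : Matrix (Fin n) (Fin n) ℝ), NI' P →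
    evalM P 0 = cx M → M.IsSymm → (∀ y, 0 ≤ (qf (cx M) y).re) →
    (∀ y, (qf (cx M) y).re ≤ γ * nsq y) → FeedbackStable P C

lemma cx_inj {A B : Matrix (Fin n) (Fin n) ℝ} (h : cx A = cx B) : A = B := by
  ext i j
  have := congrFun (congrFun h i) j
  simpa [cx] using this

lemma hyp_of {C : Matrix (Fin n) (Fin n) (RatFunc ℝ)} {γ : ℝ}
    (h : ∀ P : Matrix (Fin n) (Fin n) (RatFunc ℝ), IsNI P → ¬ HasPole P 0 →
        LoewnerLE 0 (evalR P 0) → LoewnerLE (evalR P 0) (γ • 1) → FeedbackStable P C) :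
    Hyp C γ := by
  intro P M hP he hs h1 h2
  have e : evalR P 0 = M := by
    apply cx_inj; rw [← he, evalM_zero_real]; rfl
  refine h P hP.isNI (reg_iff.1 hP.reg0) ?_ ?_
  · rw [e, LoewnerLE, sub_zero]; exact real_psd hs h1
  · rw [e, LoewnerLE]
    refine real_psd ((smul_one_symm γ).sub hs) fun y => ?_
    rw [cx_sub, qf_sub, qf_cx_smul_one, Complex.sub_re, Complex.ofReal_re]
    linarith [h2 y]

/-- complexified real vector -/
abbrev cv (x : Fin n → ℝ) : Fin n → ℂ := fun i => (x i : ℂ)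

lemma cv_ne {x : Fin n → ℝ} (h : x ≠ 0) : cv x ≠ 0 := by
  intro h'; apply h; ext i
  have := congrFun h' i
  simpa using this

lemma dyad_mulVec (x : Fin n → ℝ) (y : Fin n → ℂ) :
    cx (vecMulVec x x) *ᵥ y = (star (cv x) ⬝ᵥ y) • cv x := by
  ext i
  simp only [cx, Matrix.mulVec, dotProduct, vecMulVec_apply, Matrix.map_apply, Pi.smul_apply,
    smul_eq_mul, Finset.sum_mul, Pi.star_apply, Complex.star_def, Complex.conj_ofReal]
  refine Finset.sum_congr rfl fun j _ => ?_
  push_cast; ring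

lemma dyad_symm (x : Fin n → ℝ) : (vecMulVec x x).IsSymm := by
  ext i j; simp [vecMulVec_apply, mul_comm]

lemma dyad_qf (x : Fin n → ℝ) (y : Fin n → ℂ) :
    qf (cx (vecMulVec x x)) y = ((‖star (cv x) ⬝ᵥ y‖ ^ 2 : ℝ) : ℂ) := by
  rw [qf, dyad_mulVec, dotProduct_smul, smul_eq_mul, ← star_dot (cv x) y, Complex.star_def, Complex.mul_conj,
    Complex.normSq_eq_norm_sq]

lemma cauchy (x y : Fin n → ℂ) : ‖star x ⬝ᵥ y‖ ^ 2 ≤ nsq x * nsq y := by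
  have h1 : ‖star x ⬝ᵥ y‖ ≤ ∑ i, ‖x i‖ * ‖y i‖ := by
    rw [dotProduct]
    refine (norm_sum_le _ _).trans (le_of_eq ?_)
    simp
  exact (pow_le_pow_left₀ (norm_nonneg _) h1 2).trans (Finset.sum_mul_sq_le_sq_mul_sq _ _ _)

lemma dyad_psd (x : Fin n → ℝ) : (vecMulVec x x).PosSemidef :=
  real_psd (dyad_symm x) fun y => by rw [dyad_qf, Complex.ofReal_re]; positivity

lemma dyad_kill {x : Fin n → ℝ} {A : Matrix (Fin n) (Fin n) ℝ} {k : ℝ} (hx : x ≠ 0)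
    (h : k * (x ⬝ᵥ (A *ᵥ x)) = 1) : (1 - ((k:ℂ) • cx (vecMulVec x x)) * cx A).det = 0 := by
  by_contra h0
  refine cv_ne hx (ker_of_det h0 ?_)
  rw [Matrix.sub_mulVec, Matrix.one_mulVec, ← Matrix.mulVec_mulVec, Matrix.smul_mulVec,
    dyad_mulVec, smul_smul]
  have := qf_cx A x
  rw [qf] at this
  rw [this, ← Complex.ofReal_mul, h]; simp

section nec
variable {C : Matrix (Fin n) (Fin n) (RatFunc ℝ)} {γ : ℝ}

lemma nec_zero (hγ : 0 < γ) (hC : MemRHinf C) (h : Hyp C γ) (hs : (evalR C 0).IsSymm) :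
    LoewnerLT (evalR C 0) (γ⁻¹ • 1) := by
  refine Matrix.PosDef.of_dotProduct_mulVec_pos ?_ fun x hx => ?_
  · have := (smul_one_symm γ⁻¹).sub hs
    simpa [Matrix.IsHermitian, Matrix.IsSymm] using this
  by_contra hneg
  set q := x ⬝ᵥ (evalR C 0 *ᵥ x) with hq
  have hN := nsq_pos (cv_ne hx)
  have hxx : x ⬝ᵥ x = nsq (cv x) := by
    simp [nsq, dotProduct, pow_two]
  have h1 : γ⁻¹ * nsq (cv x) ≤ q := by
    simp only [star_trivial, Matrix.sub_mulVec, dotProduct_sub, Matrix.smul_mulVec,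
      Matrix.one_mulVec, dotProduct_smul, smul_eq_mul, hxx, not_lt] at hneg
    linarith
  have hq0 : 0 < q := lt_of_lt_of_le (by positivity) h1
  have hk : q⁻¹ * nsq (cv x) ≤ γ := by
    rw [inv_mul_le_iff₀ hq0]
    rw [inv_mul_le_iff₀ hγ] at h1; linarith
  have hpole : ∀ s, ¬ IsPoleAt (RatFunc.C q⁻¹) s := fun s => not_pole_C _ _
  have hev : ∀ s, evalC (RatFunc.C q⁻¹) s = ((q⁻¹:ℝ):ℂ) := fun s => evalC_C _
  have hP : NI' (RatFunc.C q⁻¹ • cM (vecMulVec x x)) := by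
    refine atomS (c := ((q⁻¹:ℝ):ℂ)) ?_ (fun s _ => hpole s) ?_ (dyad_psd x)
    · exact tendsto_const_nhds.congr fun s => (hev s).symm
    · intro ω _; rw [hev, Complex.ofReal_im]
  have he : ∀ s, evalM (RatFunc.C q⁻¹ • cM (vecMulVec x x)) s = cx (q⁻¹ • vecMulVec x x) := by
    intro s; rw [eval_atom (hpole s), hev, cx_smul]
  have hqf : ∀ y, (qf (cx (q⁻¹ • vecMulVec x x)) y).re = q⁻¹ * ‖star (cv x) ⬝ᵥ y‖ ^ 2 := by
    intro y; rw [cx_smul, qf_smul, dyad_qf, ← Complex.ofReal_mul, Complex.ofReal_re]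
  have hst := h _ _ hP (he 0) ((dyad_symm x).smul _) (fun y => by rw [hqf]; positivity) (fun y => by
    rw [hqf]
    calc q⁻¹ * ‖star (cv x) ⬝ᵥ y‖ ^ 2 ≤ q⁻¹ * (nsq (cv x) * nsq y) :=
          mul_le_mul_of_nonneg_left (cauchy _ _) (by positivity)
      _ = (q⁻¹ * nsq (cv x)) * nsq y := by ring
      _ ≤ _ := mul_le_mul_of_nonneg_right hk (nsq_nonneg y))
  refine stable_reg hst (s := 0) (by simp) hP.reg0 (hC.2 0 (by simp)) ?_
  rw [he, evalM_zero_real, cx_smul]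
  exact dyad_kill hx (by rw [← hq]; field_simp)

lemma nec_inf (hγ : 0 < γ) (hC : MemRHinf C) (h : Hyp C γ) (hs : (evalInf C).IsSymm) :
    (evalInf C).PosSemidef := by
  refine Matrix.PosSemidef.of_dotProduct_mulVec_nonneg ?_ fun x => ?_
  · simpa [Matrix.IsHermitian, Matrix.IsSymm] using hs
  by_contra hneg
  simp only [star_trivial, not_le] at hneg
  set q := x ⬝ᵥ (evalInf C *ᵥ x) with hq
  have hx : x ≠ 0 := by rintro rfl; simp [hq] at hneg
  have hX : ∀ s : ℂ, 0 ≤ s.re → pv (X + 1) s ≠ 0 := by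
    intro s hs h0
    have := congrArg Complex.re h0
    simp [pv] at this
    linarith
  have hev : ∀ s : ℂ, 0 ≤ s.re → evalC (rf (Polynomial.C q⁻¹ * X) (X + 1)) s = ((q⁻¹:ℝ):ℂ) * (s / (s + 1)) := by
    intro s hs
    rw [rf_eval (hX s hs)]
    simp [pv, mul_div_assoc]
  have hlim : Tendsto (evalC (rf (Polynomial.C q⁻¹ * X) (X + 1))) (cocompact ℂ) (𝓝 ((q⁻¹:ℝ):ℂ)) := by
    have := rf_inf (p := Polynomial.C q⁻¹ * X) (q := X + 1) (k := 1) (by compute_degree)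
      (by compute_degree) (by simp [Polynomial.coeff_one])
    simpa [Polynomial.coeff_one] using this
  have hP : NI' (rf (Polynomial.C q⁻¹ * X) (X + 1) • cM (vecMulVec x x)) := by
    refine atomS hlim (fun s hs => rf_pole (hX s hs)) ?_ (dyad_psd x)
    intro ω hω
    rw [hev _ (by simp [jw_re]), Complex.im_ofReal_mul]
    refine mul_nonpos_of_nonpos_of_nonneg (inv_nonpos.2 hneg.le) ?_
    rw [Complex.div_im]
    simp only [jw_re, jw_im, Complex.add_re, Complex.add_im, Complex.one_re, Complex.one_im,
      zero_add, zero_mul, zero_div, sub_zero, mul_one]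
    exact div_nonneg hω.le (Complex.normSq_nonneg _)
  have he0 : evalM (rf (Polynomial.C q⁻¹ * X) (X + 1) • cM (vecMulVec x x)) 0 = cx 0 := by
    rw [eval_atom (rf_pole (hX 0 (by simp))), hev 0 (by simp), cx_zero]; simp
  have hst := h _ _ hP he0 (by simp [Matrix.IsSymm]) (fun y => by simp [cx_zero, qf]) (fun y => by
    have := nsq_nonneg y
    simp only [cx_zero, qf, Matrix.zero_mulVec, dotProduct_zero, Complex.zero_re]; positivity)
  refine stable_inf hst (tendsto_smulM gen_cocompact hlim _) (tendsto_evalInf hC.1) ?_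
  exact dyad_kill hx (by rw [← hq]; exact inv_mul_cancel₀ hneg.ne)

lemma tendsto_jw_atTop : Tendsto jw atTop (cocompact ℂ) := by
  have : Tendsto jw (cocompact ℝ) (cocompact ℂ) := by
    have hi : Isometry jw := by
      apply Isometry.of_dist_eq; intro a b
      simp only [jw, Complex.dist_eq, ← mul_sub, norm_mul, Complex.norm_I, one_mul]
      rw [← Complex.ofReal_sub, Complex.norm_real]; rfl
    exact hi.isClosedEmbedding.tendsto_cocompact
  exact this.mono_left atTop_le_cocompact

lemma nec_symm (hC : MemRHinf C) (h : ∀ ω : ℝ, 0 < ω → ∀ y, (qf (evalM C (jw ω)) y).im ≤ 0) :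
    (evalInf C).IsSymm ∧ (evalR C 0).IsSymm := by
  constructor
  · refine symm_of_im fun y => ?_
    have h1 := (tendsto_qf (tendsto_evalInf hC.1) y).comp tendsto_jw_atTop
    refine le_of_tendsto ((Complex.continuous_im.tendsto _).comp h1) ?_
    filter_upwards [eventually_gt_atTop 0] with w hw using h w hw y
  · refine symm_of_im fun y => ?_
    have hj0 : jw 0 = 0 := by simp [jw]
    have hr : Reg C (jw 0) := hC.2 _ (by simp [jw_re])
    have h2 : Tendsto jw (𝓝[>] 0) (𝓝[≠] jw 0) :=
      (tendsto_jw 0).mono_left (nhdsWithin_mono _ fun x hx => ne_of_gt hx)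
    have h1 := tendsto_qf (hr.tendsto.comp h2) y
    rw [hj0, evalM_zero_real] at h1
    refine le_of_tendsto ((Complex.continuous_im.tendsto _).comp h1) ?_
    filter_upwards [self_mem_nhdsWithin] with w hw using h w hw y

lemma nec_det (hγ : 0 < γ) (hC : MemRHinf C) (h : Hyp C γ) {ω0 : ℝ} (hω : 0 < ω0) :
    (evalM C (jw ω0)).det ≠ 0 := by
  set ε := γ * ω0 ^ 2 with hε
  have hε0 : 0 < ε := by positivity
  have hP := atomF (n := n) (b := 0) (a := ω0 ^ 2) (ε := ε) le_rfl (by positivity) hε0.le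
  have hq0 : pv (qd 0 (ω0 ^ 2)) 0 ≠ 0 := by rw [pv_qd]; simp [hω.ne']
  have he0 : evalM (rf 1 (qd 0 (ω0 ^ 2)) • cM (ε • (1 : Matrix (Fin n) (Fin n) ℝ))) 0 = cx (γ • 1) := by
    rw [eval_atom (rf_pole hq0), rf_eval hq0, pv_one, pv_qd, cx_smul, cx_smul, smul_smul]
    congr 1
    have : (ω0:ℂ) ≠ 0 := by exact_mod_cast hω.ne'
    rw [hε]; push_cast; simp; field_simp
  have hst := h _ _ hP he0 (smul_one_symm γ)
    (fun y => by rw [qf_cx_smul_one, Complex.ofReal_re]; have := nsq_nonneg y; positivity)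
    (fun y => by rw [qf_cx_smul_one, Complex.ofReal_re])
  set P := rf 1 (qd 0 (ω0 ^ 2)) • cM (ε • (1 : Matrix (Fin n) (Fin n) ℝ)) with hPdef
  have hs : 0 ≤ (jw ω0).re := by simp [jw_re]
  have hT : Reg ((1 - P * C)⁻¹ * P) (jw ω0) := fun i j => hst.2.2 _ hs (Sum.inl i) (Sum.inr j)
  have hCr : Reg C (jw ω0) := hC.2 _ hs
  have e1 : (1 - P * C) * ((1 - P * C)⁻¹ * P) = P := by
    rw [← mul_assoc, Matrix.mul_nonsing_inv _ (isUnit_iff_ne_zero.2 hst.1), one_mul]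
  set T := (1 - P * C)⁻¹ * P
  set Q : RatFunc ℝ := algebraMap ℝ[X] (RatFunc ℝ) (qd 0 (ω0 ^ 2)) with hQ
  have hQ0 : Q ≠ 0 := RatFunc.algebraMap_ne_zero (by
    intro h; have := qd_coeff 0 (ω0^2); rw [h] at this; simp at this)
  have e2 : Q • P = cM (ε • 1) := by
    rw [hPdef, smul_smul, rf, map_one, mul_one_div_cancel hQ0, one_smul]
  have e3 : Q • T - cM (ε • 1) * C * T = cM (ε • 1) := by
    rw [← e2, smul_mul_assoc, smul_mul_assoc, ← smul_sub]
    congr 1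
    rw [sub_mul, one_mul] at e1
    exact e1
  have hQp : ¬ IsPoleAt Q (jw ω0) := by simp [hQ, IsPoleAt]
  have hQe : evalC Q (jw ω0) = 0 := by
    have : evalC Q (jw ω0) = pv (qd 0 (ω0 ^ 2)) (jw ω0) := by simp [hQ, evalC]
    rw [this, pv_qd, jw]; push_cast
    linear_combination (ω0:ℂ) ^ 2 * Complex.I_sq
  have e4 := congrArg (evalM · (jw ω0)) e3
  rw [evalM_sub (Reg.smul hQp hT) (((Reg.cM _).mul hCr).mul hT), evalM_smul hQp hT, hQe, zero_smul,
    evalM_mul ((Reg.cM _).mul hCr) hT, evalM_mul (Reg.cM _) hCr, evalM_cM] at e4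
  change 0 - cx (ε • 1) * _ * _ = cx (ε • 1) at e4
  intro h0
  have e5 := congrArg Matrix.det e4
  rw [zero_sub, Matrix.det_neg, Matrix.det_mul, Matrix.det_mul, h0, mul_zero, zero_mul, mul_zero,
    cx_det, Matrix.det_smul, Matrix.det_one, mul_one] at e5
  have : ε ^ Fintype.card (Fin n) = 0 := by exact_mod_cast e5.symm
  exact (pow_pos hε0 _).ne' this

end nec


lemma qf_bound (M : Matrix (Fin n) (Fin n) ℂ) : ∃ K : ℝ, 0 ≤ K ∧ ∀ y, ‖qf M y‖ ≤ K * nsq y := by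
  refine ⟨∑ i, ∑ j, ‖M i j‖, by positivity, fun y => ?_⟩
  have hle : ∀ i, ‖y i‖ ^ 2 ≤ nsq y := fun i =>
    Finset.single_le_sum (f := fun i => ‖y i‖ ^ 2) (fun _ _ => by positivity) (Finset.mem_univ i)
  rw [qf, dotProduct, Finset.sum_mul]
  refine (norm_sum_le _ _).trans (Finset.sum_le_sum fun i _ => ?_)
  rw [norm_mul, Matrix.mulVec, dotProduct, Finset.sum_mul]
  refine (mul_le_mul_of_nonneg_left (norm_sum_le _ _) (norm_nonneg _)).trans ?_
  rw [Finset.mul_sum]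
  refine Finset.sum_le_sum fun j _ => ?_
  rw [norm_mul, Pi.star_apply, norm_star]
  have : ‖y i‖ * ‖y j‖ ≤ nsq y := by
    nlinarith [hle i, hle j, sq_nonneg (‖y i‖ - ‖y j‖)]
  calc ‖y i‖ * (‖M i j‖ * ‖y j‖) = ‖M i j‖ * (‖y i‖ * ‖y j‖) := by ring
    _ ≤ _ := mul_le_mul_of_nonneg_left this (norm_nonneg _)

lemma herm_split {S : Matrix (Fin n) (Fin n) ℂ} (hS : S.IsHermitian) :
    ∃ A B : Matrix (Fin n) (Fin n) ℝ, A.IsSymm ∧ Bᵀ = -B ∧ S = cx A + Complex.I • cx B := by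
  have h : ∀ i j, star (S j i) = S i j := fun i j => hS.apply i j
  refine ⟨S.map Complex.re, S.map Complex.im, ?_, ?_, ?_⟩
  · ext i j
    have := congrArg Complex.re (h i j)
    simpa using this
  · ext i j
    have := congrArg Complex.im (h i j)
    simp at this ⊢
    linarith
  · ext i j
    simp only [cx, Matrix.add_apply, Matrix.smul_apply, Matrix.map_apply, smul_eq_mul]
    rw [mul_comm, Complex.re_add_im]

lemma psd_mix {A B : Matrix (Fin n) (Fin n) ℝ} (hA : A.IsSymm) (hB : Bᵀ = -B) (w : ℝ)
    (h : ∀ y, 0 ≤ (qf (cx A + jw w • cx B) y).re) : (cx A + jw w • cx B).PosSemidef := by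
  have hH : (cx A + jw w • cx B).IsHermitian := by
    have e2 : cx (-B) = - cx B := by ext; simp [cx]
    rw [Matrix.IsHermitian, Matrix.conjTranspose_add, Matrix.conjTranspose_smul, cx_conjTranspose,
      cx_conjTranspose, hA.eq, hB, e2]
    have : star (jw w) = - jw w := by simp [jw]
    rw [this, neg_smul, smul_neg, neg_neg]
  refine Matrix.PosSemidef.of_dotProduct_mulVec_nonneg hH fun y => ?_
  change 0 ≤ qf _ y
  rw [Complex.le_def]
  refine ⟨h y, ?_⟩
  have := qf_conjTranspose (cx A + jw w • cx B) y
  rw [hH.eq] at this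
  have := congrArg Complex.im this
  simp at this
  simp only [Complex.zero_im]; linarith

lemma interp {γ ω0 c : ℝ} (hγ : 0 < γ) (hω : 0 < ω0) (hc : 0 ≤ c) {S : Matrix (Fin n) (Fin n) ℂ}
    (hS : S.IsHermitian) :
    ∃ (P : Matrix (Fin n) (Fin n) (RatFunc ℝ)) (M : Matrix (Fin n) (Fin n) ℝ), NI' P ∧
      Reg P (jw ω0) ∧ evalM P (jw ω0) = S - (Complex.I * c) • 1 ∧ evalM P 0 = cx M ∧
      M.IsSymm ∧ (∀ y, 0 ≤ (qf (cx M) y).re) ∧ (∀ y, (qf (cx M) y).re ≤ γ * nsq y) := by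
  obtain ⟨A, B, hA, hB, hSe⟩ := herm_split hS
  obtain ⟨K, hK0, hK⟩ := qf_bound (cx A)
  obtain ⟨L, hL0, hL⟩ := qf_bound (cx B)
  set l := K + 2 * L + 1 with hl
  have hl0 : 0 < l := by positivity
  have hlc : 0 < l ^ 2 + c ^ 2 := by positivity
  obtain ⟨ε, hε, h1, h2, h3, h4⟩ : ∃ ε : ℝ, 0 < ε ∧ ε ≤ 3 * ω0 ^ 2 ∧ ε ≤ γ / 2 * ω0 ^ 2 / (K + l) ∧
      ε ≤ ω0 ^ 2 / 2 * (l ^ 2 + c ^ 2) / l ∧ ε ≤ γ / 4 * ω0 ^ 2 := by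
    refine ⟨min (min (3 * ω0 ^ 2) (γ / 2 * ω0 ^ 2 / (K + l)))
      (min (ω0 ^ 2 / 2 * (l ^ 2 + c ^ 2) / l) (γ / 4 * ω0 ^ 2)), ?_, ?_, ?_, ?_, ?_⟩
    · refine lt_min (lt_min ?_ ?_) (lt_min ?_ ?_) <;> positivity
    · exact (min_le_left _ _).trans (min_le_left _ _)
    · exact (min_le_left _ _).trans (min_le_right _ _)
    · exact (min_le_right _ _).trans (min_le_left _ _)
    · exact (min_le_right _ _).trans (min_le_right _ _)
  rw [le_div_iff₀ (by positivity)] at h2 h3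
  set a := ω0 ^ 2 - ε * l / (l ^ 2 + c ^ 2) with ha
  set b := ε * c / (l ^ 2 + c ^ 2) / ω0 with hb
  have hb0 : 0 ≤ b := by positivity
  have ha2 : ω0 ^ 2 / 2 ≤ a := by
    have : ε * l / (l ^ 2 + c ^ 2) ≤ ω0 ^ 2 / 2 := by rw [div_le_iff₀ hlc]; exact h3
    linarith
  have ha0 : 0 < a := lt_of_lt_of_le (by positivity) ha2
  set w := √(ω0 ^ 2 + ε) with hw
  have hw0 : 0 < w := Real.sqrt_pos.2 (by positivity)
  have hw2 : w ^ 2 = ω0 ^ 2 + ε := Real.sq_sqrt (by positivity)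
  have hwle : w ≤ 2 * ω0 := by
    refine Real.sqrt_le_iff.2 ⟨by positivity, by nlinarith⟩
  set A1 := ε • (A + l • 1) with hA1
  set B1 := (ε / ω0) • B with hB1
  have hA1s : A1.IsSymm := (hA.add (smul_one_symm l)).smul ε
  have hB1s : B1ᵀ = -B1 := by rw [hB1, Matrix.transpose_smul, hB, smul_neg]
  have hcA1 : cx A1 = (ε:ℂ) • (cx A + (l:ℂ) • 1) := by rw [hA1, cx_smul, cx_add, cx_smul, cx_one]
  have hcB1 : cx B1 = ((ε / ω0 : ℝ):ℂ) • cx B := by rw [hB1, cx_smul]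
  have hqA : ∀ y, (qf (cx A1) y).re = ε * ((qf (cx A) y).re + l * nsq y) := by
    intro y
    rw [hcA1, qf_smul, qf_add, qf_smul, qf_one, Complex.re_ofReal_mul, Complex.add_re,
      Complex.re_ofReal_mul, Complex.ofReal_re]
  have hKre : ∀ y, |(qf (cx A) y).re| ≤ K * nsq y := fun y => (Complex.abs_re_le_norm _).trans (hK y)
  have hpsd : (cx A1 + jw w • cx B1).PosSemidef := by
    refine psd_mix hA1s hB1s w fun y => ?_
    have hn := nsq_nonneg y
    have e1 : (jw w * qf (cx B1) y).re = -(w * (ε / ω0) * (qf (cx B) y).im) := by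
      rw [hcB1, qf_smul, jw]
      simp only [Complex.mul_re, Complex.mul_im, Complex.I_re, Complex.I_im, Complex.ofReal_re,
        Complex.ofReal_im]
      ring
    rw [qf_add, qf_smul, Complex.add_re, e1, hqA]
    have e2 : (qf (cx B) y).im ≤ L * nsq y := (Complex.im_le_norm _).trans (hL y)
    have e3 : w * (ε / ω0) ≤ 2 * ε := by
      rw [mul_div_assoc', div_le_iff₀ hω]; nlinarith
    have e4 : w * (ε / ω0) * (qf (cx B) y).im ≤ 2 * ε * (L * nsq y) :=
      (mul_le_mul_of_nonneg_left e2 (by positivity)).trans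
        (mul_le_mul_of_nonneg_right e3 (by positivity))
    have e5 := (abs_le.1 (hKre y)).1
    have e6 : ε * (2 * L * nsq y) ≤ ε * ((qf (cx A) y).re + l * nsq y) := by
      apply mul_le_mul_of_nonneg_left _ hε.le
      rw [hl]; nlinarith
    linarith
  have hwC : ((w ^ 2 : ℝ) : ℂ) = (ω0:ℂ) ^ 2 + ε := by rw [hw2]; push_cast; ring
  have hωC : (ω0:ℂ) ≠ 0 := by exact_mod_cast hω.ne'
  have hεC : (ε:ℂ) ≠ 0 := by exact_mod_cast hε.ne'
  have q1 : pv (qd 0 (w ^ 2)) (jw ω0) = ε := by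
    rw [pv_qd, hwC, jw]; push_cast
    linear_combination (ω0:ℂ) ^ 2 * Complex.I_sq
  have hlcC : (l:ℂ) ^ 2 + (c:ℂ) ^ 2 ≠ 0 := by exact_mod_cast hlc.ne'
  have q2 : pv (qd b a) (jw ω0) = ε * (-l + Complex.I * c) / (l ^ 2 + c ^ 2) := by
    rw [pv_qd, jw, ha, hb]; push_cast
    field_simp
    linear_combination (ω0:ℂ) ^ 2 * (l ^ 2 + c ^ 2) * Complex.I_sq
  have hlI : -(l:ℂ) + Complex.I * c ≠ 0 := by
    intro h
    have := congrArg Complex.re h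
    simp at this
    linarith
  have hq1 : pv (qd 0 (w ^ 2)) (jw ω0) ≠ 0 := by rw [q1]; exact hεC
  have hq2 : pv (qd b a) (jw ω0) ≠ 0 := by
    rw [q2]; exact div_ne_zero (mul_ne_zero hεC hlI) hlcC
  have q10 : pv (qd 0 (w ^ 2)) 0 = ((w ^ 2 : ℝ) : ℂ) := by rw [pv_qd]; simp
  have q20 : pv (qd b a) 0 = (a : ℂ) := by rw [pv_qd]; simp
  have hq10 : pv (qd 0 (w ^ 2)) 0 ≠ 0 := by rw [q10]; exact_mod_cast (by positivity : w ^ 2 ≠ 0)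
  have hq20 : pv (qd b a) 0 ≠ 0 := by rw [q20]; exact_mod_cast ha0.ne'
  have hr : ∀ s, pv (qd 0 (w ^ 2)) s ≠ 0 → pv (qd b a) s ≠ 0 →
      Reg (rf 1 (qd 0 (w ^ 2)) • cM A1 + rf X (qd 0 (w ^ 2)) • cM B1) s ∧
      Reg (rf 1 (qd b a) • cM (ε • (1 : Matrix (Fin n) (Fin n) ℝ))) s := fun s h h' =>
    ⟨(Reg.smul (rf_pole h) (Reg.cM _)).add (Reg.smul (rf_pole h) (Reg.cM _)),
      Reg.smul (rf_pole h') (Reg.cM _)⟩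
  have hev : ∀ s, pv (qd 0 (w ^ 2)) s ≠ 0 → pv (qd b a) s ≠ 0 →
      evalM ((rf 1 (qd 0 (w ^ 2)) • cM A1 + rf X (qd 0 (w ^ 2)) • cM B1) +
        rf 1 (qd b a) • cM (ε • (1 : Matrix (Fin n) (Fin n) ℝ))) s =
      (1 / pv (qd 0 (w ^ 2)) s) • cx A1 + (s / pv (qd 0 (w ^ 2)) s) • cx B1 +
        (1 / pv (qd b a) s) • (ε:ℂ) • 1 := by
    intro s h h'
    rw [evalM_add (hr s h h').1 (hr s h h').2, evalM_add (Reg.smul (rf_pole h) (Reg.cM _))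
      (Reg.smul (rf_pole h) (Reg.cM _)), eval_atom (rf_pole h), eval_atom (rf_pole h),
      eval_atom (rf_pole h'), rf_eval h, rf_eval h, rf_eval h', pv_one, pv_X, cx_smul ε 1, cx_one]
  have hqM : ∀ y, (qf (cx ((1 / w ^ 2) • A1 + (ε / a) • 1)) y).re =
      ε / w ^ 2 * ((qf (cx A) y).re + l * nsq y) + ε / a * nsq y := by
    intro y
    rw [cx_add, qf_add, qf_cx_smul_one, cx_smul, qf_smul, Complex.add_re, Complex.re_ofReal_mul,
      hqA, Complex.ofReal_re]
    ring
  refine ⟨_, (1 / w ^ 2) • A1 + (ε / a) • 1, (atomL hw0 hA1s hB1s hpsd).add (atomF hb0 ha0 hε.le),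
    (hr _ hq1 hq2).1.add (hr _ hq1 hq2).2, ?_, ?_, (hA1s.smul _).add (smul_one_symm _), ?_, ?_⟩
  · rw [hev _ hq1 hq2, q1, q2, hcA1, hcB1, hSe, smul_smul, smul_smul, smul_smul]
    have e1 : 1 / (ε:ℂ) * ε = 1 := by field_simp
    have e2 : jw ω0 / (ε:ℂ) * ((ε / ω0 : ℝ) : ℂ) = Complex.I := by
      rw [jw]; push_cast; field_simp
    have e3 : 1 / ((ε:ℂ) * (-l + Complex.I * c) / (l ^ 2 + c ^ 2)) * ε = -l - Complex.I * c := by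
      field_simp
      linear_combination (c:ℂ) ^ 2 * Complex.I_sq
    rw [e1, e2, e3, one_smul, sub_smul, neg_smul]
    abel
  · rw [hev _ hq10 hq20, q10, q20, zero_div, zero_smul, add_zero, cx_add, cx_smul (1 / w ^ 2), cx_smul (ε / a) 1,
      cx_one, smul_smul]
    push_cast
    congr 2
    ring
  · intro y
    rw [hqM]
    have hn := nsq_nonneg y
    have e5 := (abs_le.1 (hKre y)).1
    have : 0 ≤ (qf (cx A) y).re + l * nsq y := by
      rw [hl]; nlinarith [mul_nonneg hL0 hn]
    positivity
  · intro y
    rw [hqM]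
    have hn := nsq_nonneg y
    have e5 := (abs_le.1 (hKre y)).2
    have f1 : ε / w ^ 2 * ((qf (cx A) y).re + l * nsq y) ≤ ε / w ^ 2 * ((K + l) * nsq y) :=
      mul_le_mul_of_nonneg_left (by linarith) (by positivity)
    have f2 : ε / w ^ 2 * (K + l) ≤ γ / 2 := by
      rw [div_mul_eq_mul_div, div_le_iff₀ (by positivity), hw2]
      nlinarith [mul_pos hγ hε]
    have f3 : ε / a ≤ γ / 2 := by
      rw [div_le_iff₀ ha0]; nlinarith
    have f4 := mul_le_mul_of_nonneg_right f2 hn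
    have f5 := mul_le_mul_of_nonneg_right f3 hn
    linarith

lemma nec_sni {C : Matrix (Fin n) (Fin n) (RatFunc ℝ)} {γ : ℝ} (hγ : 0 < γ) (hC : MemRHinf C)
    (h : Hyp C γ) : IsSNI C := by
  refine ⟨hC, fun ω0 hω => ?_⟩
  rw [niKer_pd]
  intro x hx
  by_contra hneg
  rw [not_lt] at hneg
  set y := evalM C (jw ω0) *ᵥ x with hy
  have hy0 : y ≠ 0 := fun h0 => hx (ker_of_det (nec_det hγ hC h hω) h0)
  have hN := nsq_pos hy0
  set N := nsq y with hNd
  have hNC : (N:ℂ) ≠ 0 := by exact_mod_cast hN.ne'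
  have hz : qf (evalM C (jw ω0)) x = star x ⬝ᵥ y := rfl
  rw [hz] at hneg
  set z := star x ⬝ᵥ y with hzd
  set c := z.im / N with hcd
  have hc : 0 ≤ c := div_nonneg hneg hN.le
  set v := x + (Complex.I * c) • y with hv
  have hyy : star y ⬝ᵥ y = (N:ℂ) := star_dot_self y
  have hyx : star y ⬝ᵥ x = star z := by rw [hzd, star_dot]
  have hyv : star y ⬝ᵥ v = (z.re : ℂ) := by
    rw [hv, dotProduct_add, dotProduct_smul, hyx, hyy, hcd, smul_eq_mul]
    push_cast
    field_simp
    apply Complex.ext <;> simp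
  have hvy : star v ⬝ᵥ y = (z.re : ℂ) := by
    rw [← star_dot, hyv]; simp
  set S : Matrix (Fin n) (Fin n) ℂ := ((N⁻¹:ℝ):ℂ) • (vecMulVec v (star y) + vecMulVec y (star v)) -
    ((z.re / N ^ 2 : ℝ) : ℂ) • vecMulVec y (star y) with hS
  have hSh : S.IsHermitian := by
    rw [Matrix.IsHermitian, hS]
    simp only [Matrix.conjTranspose_sub, Matrix.conjTranspose_smul, Matrix.conjTranspose_add,
      Matrix.conjTranspose_vecMulVec, star_star, Complex.star_def, Complex.conj_ofReal]
    rw [add_comm (vecMulVec y (star v))]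
  have hSy : S *ᵥ y = v := by
    rw [hS]
    simp only [Matrix.sub_mulVec, Matrix.smul_mulVec, Matrix.add_mulVec, Matrix.vecMulVec_mulVec,
      hyy, hvy]
    ext i
    simp
    field_simp
    ring
  obtain ⟨P, M, hP, hr, he, he0, hs, hb1, hb2⟩ := interp hγ hω hc hSh
  have hst := h P M hP he0 hs hb1 hb2
  refine hx (ker_of_det (stable_reg hst (s := jw ω0) (by simp [jw_re]) hr (hC.2 _ (by simp [jw_re]))) ?_)
  rw [Matrix.sub_mulVec, Matrix.one_mulVec, ← Matrix.mulVec_mulVec, he, ← hy, Matrix.sub_mulVec, hSy,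
    Matrix.smul_mulVec, Matrix.one_mulVec, hv]
  simp

lemma nec {C : Matrix (Fin n) (Fin n) (RatFunc ℝ)} {γ : ℝ} (hγ : 0 < γ) (hC : MemRHinf C)
    (h : Hyp C γ) : IsSNI C ∧ (evalInf C).PosSemidef ∧ LoewnerLT (evalR C 0) (γ⁻¹ • 1) := by
  have h1 := nec_sni hγ hC h
  obtain ⟨h2, h3⟩ := nec_symm hC fun ω hω => niKer_psd.1 (h1.2 ω hω).posSemidef
  exact ⟨h1, nec_inf hγ hC h h2, nec_zero hγ hC h h3⟩



/-- converse theorem for NI uncertainty without origin poles and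
bounded static gain. -/
theorem converse_N0_static_bound {n : ℕ} (C : Matrix (Fin n) (Fin n) (RatFunc ℝ)) (hC : MemRHinf C)
    (γ : ℝ) (hγ : 0 < γ) :
    ((∀ P : Matrix (Fin n) (Fin n) (RatFunc ℝ), IsNI P → ¬ HasPole P 0 →
        LoewnerLE (evalR P 0) (γ • 1) → FeedbackStable P C) ↔
     (∀ P : Matrix (Fin n) (Fin n) (RatFunc ℝ), IsNI P → ¬ HasPole P 0 →
        LoewnerLE 0 (evalR P 0) → LoewnerLE (evalR P 0) (γ • 1) → FeedbackStable P C)) ∧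
    ((∀ P : Matrix (Fin n) (Fin n) (RatFunc ℝ), IsNI P → ¬ HasPole P 0 →
        LoewnerLE (evalR P 0) (γ • 1) → FeedbackStable P C) ↔
     (IsSNI C ∧ (evalInf C).PosSemidef ∧ LoewnerLT (evalR C 0) (γ⁻¹ • 1))) := by
  have h31 : IsSNI C ∧ (evalInf C).PosSemidef ∧ LoewnerLT (evalR C 0) (γ⁻¹ • 1) →
      ∀ P : Matrix (Fin n) (Fin n) (RatFunc ℝ), IsNI P → ¬ HasPole P 0 →
        LoewnerLE (evalR P 0) (γ • 1) → FeedbackStable P C :=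
    fun h P hP hp hle => suff hγ h.1 h.2.1 h.2.2 hP (reg_iff.2 hp) hle
  have h23 : (∀ P : Matrix (Fin n) (Fin n) (RatFunc ℝ), IsNI P → ¬ HasPole P 0 →
        LoewnerLE 0 (evalR P 0) → LoewnerLE (evalR P 0) (γ • 1) → FeedbackStable P C) →
      IsSNI C ∧ (evalInf C).PosSemidef ∧ LoewnerLT (evalR C 0) (γ⁻¹ • 1) :=
    fun h => nec hγ hC (hyp_of h)
  exact ⟨⟨fun h P hP hp _ hle => h P hP hp hle, fun h => h31 (h23 h)⟩,
    ⟨fun h => h23 fun P hP hp _ hle => h P hP hp hle, h31⟩⟩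

end NIControl
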